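/- Suppose there exists R such that every elliptic curve E over ℚ with j-invariant equal to 0 satisfies rank E(ℚ) ≤ R. Then there exists an integer N₀ such that for every sixth-power free integer n, every sequence of affine rational points on the Mordell curve Aₙ : y² = x³ + n whose x-coordinates form a non-trivial arithmetic progression, or whose y-coordinates form a non-trivial arithmetic progression, has length at most N₀. -/

import Mathlib

open scoped TensorProduct

/-- The rank of an abelian group `G`, i.e. `dim_ℚ (G ⊗_ℤ ℚ)`. -/
noncomputable def grpRank (G : Type*) [AddCommGroup G] : ℕ :=
  Module.finrank ℚ (ℚ ⊗[ℤ] G)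

/-- `u 0, …, u (N-1)` is a non-trivial arithmetic progression. -/
def IsNontrivAP {F : Type*} [Field F] {N : ℕ} (u : Fin N → F) : Prop :=
  ∃ a b : F, b ≠ 0 ∧ ∀ i : Fin N, u i = a + (((i : ℕ) + 1 : ℕ) : F) * b

/-- A nonzero integer is sixth-power free if no `p⁶` divides it. -/
def SixthPowerFree (n : ℤ) : Prop :=
  n ≠ 0 ∧ ∀ p : ℕ, p.Prime → ¬ ((p : ℤ) ^ 6 ∣ n)

/-- The Mordell curve `Aₙ : y² = x³ + n` over `ℚ`. -/
def MordellCurve (n : ℤ) : WeierstrassCurve ℚ :=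
  ⟨0, 0, 0, 0, (n : ℚ)⟩

namespace Moh
open Height AdmissibleAbsValues Real

/-- Local contribution to a product of heights. -/
noncomputable def lp (l : List ℚ) (v : AbsoluteValue ℚ ℝ) : ℝ :=
  (l.map fun x => max (v x) 1).prod

lemma lp_nil (v : AbsoluteValue ℚ ℝ) : lp [] v = 1 := rfl

lemma lp_cons (x : ℚ) (l : List ℚ) (v : AbsoluteValue ℚ ℝ) :
    lp (x :: l) v = max (v x) 1 * lp l v := by simp [lp]

lemma one_le_lp (l : List ℚ) (v : AbsoluteValue ℚ ℝ) : 1 ≤ lp l v := by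
  induction l with
  | nil => simp [lp]
  | cons a l ih => rw [lp_cons]; exact one_le_mul_of_one_le_of_one_le (le_max_right _ _) ih

lemma fms_max (x : ℚ) :
    (fun v : nonarchAbsVal (K := ℚ) ↦ max (v.val x) 1).HasFiniteMulSupport := by
  by_cases hx : x = 0
  · subst hx
    simp [Function.HasFiniteMulSupport, Function.mulSupport]
  · have := hasFiniteMulSupport (K := ℚ) hx
    refine Set.Finite.subset this ?_
    intro v hv hv'
    apply hv
    simp only at hv' ⊢
    rw [hv', max_self]

lemma fms_lp (l : List ℚ) :
    (fun v : nonarchAbsVal (K := ℚ) ↦ lp l v.val).HasFiniteMulSupport := by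
  induction l with
  | nil => simp [lp, Function.HasFiniteMulSupport, Function.mulSupport]
  | cons a l ih =>
    simp only [lp_cons]
    exact Function.HasFiniteMulSupport.mul (fms_max a) ih

lemma prod_lp (l : List ℚ) :
    (l.map mulHeight₁).prod =
      (archAbsVal.map fun v ↦ lp l v).prod * ∏ᶠ v : nonarchAbsVal (K := ℚ), lp l v.val := by
  induction l with
  | nil => simp [lp]
  | cons a l ih =>
    simp only [lp_cons, List.map_cons, List.prod_cons, ih]
    rw [Multiset.prod_map_mul, finprod_mul_distrib (fms_max a) (fms_lp l), mulHeight₁_eq]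
    ring

lemma card_arch : Multiset.card (archAbsVal (K := ℚ)) = 1 := by
  have := NumberField.totalWeight_eq_finrank ℚ
  simpa [totalWeight] using this

lemma sum_log (l : List ℚ) : (l.map logHeight₁).sum = log (l.map mulHeight₁).prod ∧
    0 < (l.map mulHeight₁).prod := by
  induction l with
  | nil => simp
  | cons a l ih =>
    simp only [List.map_cons, List.prod_cons, List.sum_cons]
    rw [log_mul (mulHeight₁_ne_zero a) ih.2.ne', ih.1]
    exact ⟨rfl, mul_pos (mulHeight₁_pos a) ih.2⟩

/-- quasi-ultrametric constant -/
def Qu (v : AbsoluteValue ℚ ℝ) (κ : ℝ) : Prop :=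
  1 ≤ κ ∧ ∀ a b, v (a + b) ≤ κ * max (v a) (v b)

lemma qu_arch (v : AbsoluteValue ℚ ℝ) : Qu v 2 := by
  refine ⟨by norm_num, fun a b => (v.add_le a b).trans ?_⟩
  linarith [le_max_left (v a) (v b), le_max_right (v a) (v b)]

lemma qu_na (v : AbsoluteValue ℚ ℝ) (h : IsNonarchimedean v) : Qu v 1 := by
  refine ⟨le_rfl, fun a b => ?_⟩
  rw [one_mul]; exact h a b

theorem global_le (l r : List ℚ) (s : ℚ) (hs : s ≠ 0) (m : ℕ)
    (H : ∀ v κ, Qu v κ → lp l v * v s ≤ κ ^ m * lp r v) :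
    (l.map logHeight₁).sum ≤ (r.map logHeight₁).sum + m * log 2 := by
  have ha : ((archAbsVal (K := ℚ)).map fun v ↦ lp l v * v s).prod ≤
      ((archAbsVal (K := ℚ)).map fun v ↦ 2 ^ m * lp r v).prod :=
    Multiset.prod_map_le_prod_map₀ _ _
      (fun v _ => mul_nonneg (zero_le_one.trans (one_le_lp l v)) (v.nonneg s))
      (fun v _ => H v 2 (qu_arch v))
  have hn : ∏ᶠ v : nonarchAbsVal (K := ℚ), (lp l v.val * v.val s) ≤
      ∏ᶠ v : nonarchAbsVal (K := ℚ), lp r v.val := by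
    refine finprod_le_finprod ?_ ?_ ?_ ?_
    · exact Function.HasFiniteMulSupport.mul (fms_lp l) (hasFiniteMulSupport hs)
    · intro v; exact mul_nonneg (zero_le_one.trans (one_le_lp l _)) (v.val.nonneg s)
    · exact fms_lp r
    · intro v
      simpa using H v.val 1 (qu_na _ (isNonarchimedean v.val v.2))
  rw [Multiset.prod_map_mul] at ha
  rw [Multiset.prod_map_mul, Multiset.map_const', card_arch, Multiset.prod_replicate, pow_one] at ha
  rw [finprod_mul_distrib (fms_lp l) (hasFiniteMulSupport hs)] at hn
  have hp := product_formula hs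
  have h0 : 0 ≤ ∏ᶠ v : nonarchAbsVal (K := ℚ), lp r v.val :=
    finprod_nonneg fun v => zero_le_one.trans (one_le_lp _ _)
  have h0' : 0 ≤ (∏ᶠ v : nonarchAbsVal (K := ℚ), lp l v.val) * ∏ᶠ v : nonarchAbsVal (K := ℚ), v.val s :=
    mul_nonneg (finprod_nonneg fun v => zero_le_one.trans (one_le_lp _ _))
      (finprod_nonneg fun v => v.val.nonneg _)
  have h1 : 0 ≤ 2 ^ m * ((archAbsVal (K := ℚ)).map fun v ↦ lp r v).prod := by
    refine mul_nonneg (by positivity) (Multiset.prod_nonneg ?_)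
    intro a ha
    obtain ⟨v, _, rfl⟩ := Multiset.mem_map.1 ha
    exact zero_le_one.trans (one_le_lp _ _)
  have key := mul_le_mul ha hn h0' h1
  have e1 : (l.map mulHeight₁).prod ≤ 2 ^ m * (r.map mulHeight₁).prod := by
    rw [prod_lp l, prod_lp r]
    calc _ = ((archAbsVal (K := ℚ)).map fun v ↦ lp l v).prod *
              (∏ᶠ v : nonarchAbsVal (K := ℚ), lp l v.val) *
              (((archAbsVal (K := ℚ)).map (· s)).prod * ∏ᶠ v : nonarchAbsVal (K := ℚ), v.val s) := by
            rw [hp, mul_one]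
      _ ≤ _ := by
            refine le_trans (le_of_eq ?_) (key.trans (le_of_eq ?_)) <;> ring
  rw [(sum_log l).1, (sum_log r).1]
  calc _ ≤ log (2 ^ m * (r.map mulHeight₁).prod) := log_le_log (sum_log l).2 e1
    _ = _ := by rw [log_mul (by positivity) (sum_log r).2.ne', log_pow]; ring

end Moh

set_option linter.unnecessarySeqFocus false
namespace Moh
open Height AdmissibleAbsValues Real

section loc
variable {v : AbsoluteValue ℚ ℝ} {κ : ℝ}

lemma Qu.add_le (h : Qu v κ) {a b : ℚ} {A : ℝ} (ha : v a ≤ A) (hb : v b ≤ A) :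
    v (a + b) ≤ κ * A :=
  (h.2 a b).trans (mul_le_mul_of_nonneg_left (max_le ha hb) (zero_le_one.trans h.1))

lemma Qu.sub_le (h : Qu v κ) {a b : ℚ} {A : ℝ} (ha : v a ≤ A) (hb : v b ≤ A) :
    v (a - b) ≤ κ * A := by
  rw [sub_eq_add_neg]; exact h.add_le ha (by rwa [v.map_neg])

lemma Qu.nat_le (h : Qu v κ) (k : ℕ) : v (k : ℚ) ≤ κ ^ k := by
  induction k with
  | zero => simp
  | succ k ih =>
    rw [Nat.cast_succ, pow_succ, mul_comm]
    exact h.add_le ih (by rw [v.map_one]; exact one_le_pow₀ h.1)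

lemma Qu.int_le (h : Qu v κ) (k : ℤ) (N : ℕ) (hk : k.natAbs ≤ N) : v (k : ℚ) ≤ κ ^ N := by
  have h1 : v (k : ℚ) = v ((k.natAbs : ℕ) : ℚ) := by
    obtain ⟨m, rfl | rfl⟩ := k.eq_nat_or_neg
    · simp
    · simp [v.map_neg]
  rw [h1]
  exact (h.nat_le _).trans (pow_le_pow_right₀ h.1 hk)

lemma Qu.two_le (h : Qu v κ) : v 2 ≤ κ := by
  have := h.add_le (a := 1) (b := 1) (A := 1) (by simp) (by simp)
  norm_num at this; exact this

lemma Qu.four_le (h : Qu v κ) : v 4 ≤ κ ^ 2 := by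
  rw [show (4 : ℚ) = 2 ^ 2 by norm_num, v.map_pow]
  exact pow_le_pow_left₀ (v.nonneg _) h.two_le 2

lemma Qu.eight_le (h : Qu v κ) : v 8 ≤ κ ^ 3 := by
  rw [show (8 : ℚ) = 2 ^ 3 by norm_num, v.map_pow]
  exact pow_le_pow_left₀ (v.nonneg _) h.two_le 3

/-- the basic translation between the local height of `x ^ 3 / n` and `max (v x) τ` -/
lemma max_eq (n x : ℚ) (τ : ℝ) (hτ : 0 < τ) (hn : τ ^ 3 = v n) :
    max (v (x ^ 3 / n)) 1 = (max (v x) τ / τ) ^ 3 := by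
  rw [map_div₀, v.map_pow, ← hn, ← div_pow]
  rcases le_total (v x) τ with h | h
  · rw [max_eq_right h, div_self hτ.ne', max_eq_right]
    · simp
    · exact pow_le_one₀ (div_nonneg (v.nonneg _) hτ.le) ((div_le_one hτ).2 h)
  · rw [max_eq_left h, max_eq_left]
    exact one_le_pow₀ ((one_le_div hτ).2 h)

lemma exists_tau (v : AbsoluteValue ℚ ℝ) {n : ℚ} (hn : n ≠ 0) : ∃ τ : ℝ, 0 < τ ∧ τ ^ 3 = v n := by
  have h : 0 < v n := v.pos hn
  refine ⟨v n ^ ((1 : ℝ) / 3), rpow_pos_of_pos h _, ?_⟩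
  rw [← rpow_natCast, ← rpow_mul h.le]
  norm_num

lemma loc_pair (h : Qu v κ) {x₃ x₄ : ℚ} {τ D B : ℝ} (hτ : 0 < τ) (hD : 0 ≤ D)
    (hp : v (x₃ * x₄) * D ≤ B) (hs : τ * v (x₃ + x₄) * D ≤ B) (ht : τ ^ 2 * D ≤ B) :
    max (v x₃) τ * max (v x₄) τ * D ≤ κ * B := by
  have hB : 0 ≤ B := le_trans (by positivity) ht
  have hκ := h.1
  have hB' : B ≤ κ * B := by nlinarith
  have aux : ∀ a b : ℚ, v b ≤ τ → τ ≤ v a → τ * v (a + b) * D ≤ B → τ * v a * D ≤ κ * B := by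
    intro a b hb ha hab
    have h1 := h.2 (a + b) (-b)
    rw [v.map_neg, add_neg_cancel_right] at h1
    have : v a ≤ κ * max (v (a + b)) τ := h1.trans (by gcongr)
    calc τ * v a * D ≤ τ * (κ * max (v (a + b)) τ) * D := by gcongr
      _ = κ * (max (v (a+b)) τ * (τ * D)) := by ring
      _ ≤ κ * B := by
        gcongr
        rcases le_total (v (a+b)) τ with h | h
        · rw [max_eq_right h]; linarith
        · rw [max_eq_left h]; linarith
  rcases le_total (v x₃) τ with h3 | h3 <;> rcases le_total (v x₄) τ with h4 | h4
  · rw [max_eq_right h3, max_eq_right h4]; linarith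
  · rw [max_eq_right h3, max_eq_left h4]
    exact aux x₄ x₃ h3 h4 (by rwa [add_comm])
  · rw [max_eq_left h3, max_eq_right h4, mul_comm (v x₃)]
    exact aux x₃ x₄ h4 h3 hs
  · rw [max_eq_left h3, max_eq_left h4, ← v.map_mul]; linarith

lemma loc_add (h : Qu v κ) {n x₁ x₂ x₃ x₄ : ℚ} {τ : ℝ} (hτ : 0 < τ) (hn : τ ^ 3 = v n)
    (e1 : (x₃ + x₄) * (x₁ - x₂) ^ 2 = 2 * x₁ * x₂ * (x₁ + x₂) + 4 * n)
    (e2 : x₃ * x₄ * (x₁ - x₂) ^ 2 = (x₁ * x₂) ^ 2 - 4 * n * (x₁ + x₂)) :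
    max (v x₃) τ * max (v x₄) τ * v (x₁ - x₂) ^ 2 ≤
      κ ^ 5 * (max (v x₁) τ * max (v x₂) τ) ^ 2 := by
  have hκ := h.1
  have hκ0 : 0 < κ := by linarith
  set M₁ := max (v x₁) τ
  set M₂ := max (v x₂) τ
  have a1 : v x₁ ≤ M₁ := le_max_left _ _
  have a2 : v x₂ ≤ M₂ := le_max_left _ _
  have b1 : τ ≤ M₁ := le_max_right _ _
  have b2 : τ ≤ M₂ := le_max_right _ _
  have p1 : 0 < M₁ := by linarith
  have p2 : 0 < M₂ := by linarith
  have v1 := v.nonneg x₁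
  have v2 := v.nonneg x₂
  set E := M₁ * M₂ with hE
  have E0 : 0 < E := by positivity
  have hmax : τ * max M₁ M₂ ≤ E := by
    rcases le_total M₁ M₂ with h | h
    · rw [max_eq_right h]; exact mul_le_mul_of_nonneg_right b1 p2.le
    · rw [max_eq_left h, hE, mul_comm M₁]; exact mul_le_mul_of_nonneg_right b2 p1.le
  have hX : v x₁ * v x₂ ≤ E := mul_le_mul a1 a2 v2 p1.le
  have hS : τ * v (x₁ + x₂) ≤ κ * E := by
    have := h.add_le (a1.trans (le_max_left M₁ M₂)) (a2.trans (le_max_right M₁ M₂))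
    calc _ ≤ τ * (κ * max M₁ M₂) := by gcongr
      _ = κ * (τ * max M₁ M₂) := by ring
      _ ≤ _ := by gcongr
  have hDf : τ * v (x₁ - x₂) ≤ κ * E := by
    have := h.sub_le (a1.trans (le_max_left M₁ M₂)) (a2.trans (le_max_right M₁ M₂))
    calc _ ≤ τ * (κ * max M₁ M₂) := by gcongr
      _ = κ * (τ * max M₁ M₂) := by ring
      _ ≤ _ := by gcongr
  have hτE : τ ^ 2 ≤ E := by rw [pow_two]; exact mul_le_mul b1 b2 hτ.le p1.le
  have k1 : ∀ i : ℕ, 1 ≤ κ ^ i := fun i => one_le_pow₀ hκ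
  have main : max (v x₃) τ * max (v x₄) τ * v (x₁ - x₂) ^ 2 ≤ κ * (κ ^ 4 * E ^ 2) := by
    apply loc_pair h hτ (by positivity)
    · rw [← v.map_pow, ← v.map_mul, e2]
      have : v ((x₁ * x₂) ^ 2 - 4 * n * (x₁ + x₂)) ≤ κ * (κ ^ 3 * E ^ 2) := by
        apply h.sub_le
        · rw [v.map_pow, v.map_mul]
          calc _ ≤ E ^ 2 := by gcongr
            _ ≤ _ := le_mul_of_one_le_left (by positivity) (k1 3)
        · rw [v.map_mul, v.map_mul, ← hn]
          calc v 4 * τ ^ 3 * v (x₁ + x₂) = v 4 * (τ ^ 2 * (τ * v (x₁ + x₂))) := by ring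
            _ ≤ κ ^ 2 * (E * (κ * E)) := by
              have := h.four_le
              gcongr
            _ = _ := by ring
      linarith
    · rw [mul_assoc, ← v.map_pow, ← v.map_mul, e1]
      have : v (2 * x₁ * x₂ * (x₁ + x₂) + 4 * n) ≤ κ * (κ ^ 2 * E ^ 2 / τ) := by
        apply h.add_le
        · rw [le_div_iff₀ hτ, v.map_mul, v.map_mul, v.map_mul]
          calc _ = v 2 * ((v x₁ * v x₂) * (τ * v (x₁ + x₂))) := by ring
            _ ≤ κ * (E * (κ * E)) := by
              have := h.two_le
              gcongr
            _ = _ := by ring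
        · rw [le_div_iff₀ hτ, v.map_mul, ← hn]
          calc _ = v 4 * (τ ^ 2) ^ 2 := by ring
            _ ≤ _ := by
              have := h.four_le
              gcongr
      calc _ ≤ τ * (κ * (κ ^ 2 * E ^ 2 / τ)) := by gcongr
        _ = κ ^ 3 * E ^ 2 := by field_simp
        _ ≤ _ := by gcongr <;> norm_num
    · calc _ = (τ * v (x₁ - x₂)) ^ 2 := by ring
        _ ≤ (κ * E) ^ 2 := by gcongr
        _ = κ ^ 2 * E ^ 2 := by ring
        _ ≤ _ := by gcongr <;> norm_num
  calc _ ≤ _ := main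
    _ = _ := by ring

lemma loc_dbl_le (h : Qu v κ) {n x x' : ℚ} {τ : ℝ} (hτ : 0 < τ) (hn : τ ^ 3 = v n)
    (e : x' * (4 * (x ^ 3 + n)) = x ^ 4 - 8 * n * x) :
    max (v x') τ * v (4 * (x ^ 3 + n)) ≤ κ ^ 4 * (max (v x) τ) ^ 4 := by
  have hκ := h.1
  have hκ0 : 0 < κ := by linarith
  set M := max (v x) τ
  have a1 : v x ≤ M := le_max_left _ _
  have b1 : τ ≤ M := le_max_right _ _
  have p1 : 0 < M := by linarith
  have v1 := v.nonneg x
  have k1 : ∀ i : ℕ, 1 ≤ κ ^ i := fun i => one_le_pow₀ hκ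
  rw [max_mul_of_nonneg _ _ (v.nonneg _), ← v.map_mul, e]
  apply max_le
  · calc _ ≤ κ * (κ ^ 3 * M ^ 4) := by
          apply h.sub_le
          · rw [v.map_pow]
            calc _ ≤ M ^ 4 := by gcongr
              _ ≤ _ := le_mul_of_one_le_left (by positivity) (k1 3)
          · rw [v.map_mul, v.map_mul, ← hn]
            calc _ ≤ κ ^ 3 * M ^ 3 * M := by
                  have := h.eight_le
                  gcongr
              _ = _ := by ring
      _ = _ := by ring
  · rw [v.map_mul]
    have : v (x ^ 3 + n) ≤ κ * M ^ 3 := by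
      apply h.add_le
      · rw [v.map_pow]; gcongr
      · rw [← hn]; gcongr
    calc _ ≤ M * (κ ^ 2 * (κ * M ^ 3)) := by
          have := h.four_le
          gcongr
      _ = κ ^ 3 * M ^ 4 := by ring
      _ ≤ _ := by gcongr <;> norm_num

lemma loc_dbl_ge (h : Qu v κ) {n x x' : ℚ} {τ : ℝ} (hτ : 0 < τ) (hn : τ ^ 3 = v n)
    (e : x' * (4 * (x ^ 3 + n)) = x ^ 4 - 8 * n * x) :
    (max (v x) τ) ^ 4 * v 108 ≤ κ ^ 200 * (max (v x') τ * v (4 * (x ^ 3 + n))) := by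
  have hκ := h.1
  have hκ0 : 0 < κ := by linarith
  have v1 := v.nonneg x
  have k1 : ∀ i : ℕ, 1 ≤ κ ^ i := fun i => one_le_pow₀ hκ
  have h108 : v 108 ≤ κ ^ 108 := by simpa using h.nat_le 108
  have h12 : v 12 ≤ κ ^ 12 := by simpa using h.nat_le 12
  have h3 : v 3 ≤ κ ^ 3 := by simpa using h.nat_le 3
  have h27 : v 27 ≤ κ ^ 27 := by simpa using h.nat_le 27
  set W := max (v x') τ * v (4 * (x ^ 3 + n)) with hW
  have hF : v (x ^ 4 - 8 * n * x) ≤ W := by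
    rw [← e, v.map_mul]; exact mul_le_mul_of_nonneg_right (le_max_left _ _) (v.nonneg _)
  have hG : τ * v (4 * (x ^ 3 + n)) ≤ W :=
    mul_le_mul_of_nonneg_right (le_max_right _ _) (v.nonneg _)
  have W0 : 0 ≤ W := (v.nonneg _).trans hF
  by_cases hx : v x ≤ κ ^ 2 * τ
  · have hM : max (v x) τ ≤ κ ^ 2 * τ := max_le hx (le_mul_of_one_le_left hτ.le (k1 2))
    have hid : 108 * n ^ 2 = 12 * x ^ 2 * (x ^ 4 - 8 * n * x) - (3 * x ^ 3 - 27 * n) * (4 * (x ^ 3 + n)) := by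
      ring
    have h2 : v (108 * n ^ 2) ≤ κ * (κ ^ 60 * τ ^ 2 * W) := by
      rw [hid]
      apply h.sub_le
      · rw [v.map_mul, v.map_mul, v.map_pow]
        calc _ ≤ κ ^ 12 * (κ ^ 2 * τ) ^ 2 * W := by gcongr
          _ = κ ^ 16 * (τ ^ 2 * W) := by ring
          _ ≤ κ ^ 60 * (τ ^ 2 * W) := by gcongr <;> norm_num
          _ = _ := by ring
      · rw [v.map_mul]
        have : v (3 * x ^ 3 - 27 * n) ≤ κ * (κ ^ 40 * τ ^ 3) := by
          apply h.sub_le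
          · rw [v.map_mul, v.map_pow]
            calc _ ≤ κ ^ 3 * (κ ^ 2 * τ) ^ 3 := by gcongr
              _ = κ ^ 9 * τ ^ 3 := by ring
              _ ≤ _ := by gcongr <;> norm_num
          · rw [v.map_mul, ← hn]
            calc _ ≤ κ ^ 27 * τ ^ 3 := by gcongr
              _ ≤ _ := by gcongr <;> norm_num
        calc _ ≤ (κ * (κ ^ 40 * τ ^ 3)) * v (4 * (x ^ 3 + n)) := by gcongr
          _ = κ ^ 41 * τ ^ 2 * (τ * v (4 * (x ^ 3 + n))) := by ring
          _ ≤ κ ^ 60 * τ ^ 2 * W := by gcongr <;> norm_num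
    rw [v.map_mul, v.map_pow, ← hn] at h2
    have h3 : v 108 * τ ^ 4 ≤ κ ^ 61 * W := by
      have : τ ^ 2 * (v 108 * τ ^ 4) ≤ τ ^ 2 * (κ ^ 61 * W) := by
        calc _ = v 108 * (τ ^ 3) ^ 2 := by ring
          _ ≤ _ := h2
          _ = _ := by ring
      exact le_of_mul_le_mul_left this (by positivity)
    calc _ ≤ (κ ^ 2 * τ) ^ 4 * v 108 := by gcongr
      _ = κ ^ 8 * (v 108 * τ ^ 4) := by ring
      _ ≤ κ ^ 8 * (κ ^ 61 * W) := by gcongr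
      _ = κ ^ 69 * W := by ring
      _ ≤ _ := by gcongr <;> norm_num
  · push Not at hx
    have hx1 : τ ≤ v x := (le_mul_of_one_le_left hτ.le (k1 2)).trans hx.le
    have x0 : 0 < v x := by linarith
    rw [max_eq_left hx1]
    have h4 : v x ^ 4 ≤ κ * W := by
      by_contra hc
      push Not at hc
      have h5 := h.2 (x ^ 4 - 8 * n * x) (8 * n * x)
      rw [sub_add_cancel, v.map_pow] at h5
      have h6 : v (8 * n * x) ≤ κ ^ 3 * τ ^ 3 * v x := by
        rw [v.map_mul, v.map_mul, ← hn]
        have := h.eight_le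
        gcongr
      have h7 : κ * (κ ^ 3 * τ ^ 3 * v x) < v x ^ 4 := by
        calc κ * (κ ^ 3 * τ ^ 3 * v x) = κ ^ 4 * τ ^ 3 * v x := by ring
          _ ≤ κ ^ 6 * τ ^ 3 * v x := by gcongr <;> norm_num
          _ = (κ ^ 2 * τ) ^ 3 * v x := by ring
          _ < v x ^ 3 * v x := by gcongr
          _ = _ := by ring
      rcases le_total (v (x ^ 4 - 8 * n * x)) (v (8 * n * x)) with h8 | h8
      · rw [max_eq_right h8] at h5
        have : κ * v (8 * n * x) ≤ κ * (κ ^ 3 * τ ^ 3 * v x) := by gcongr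
        linarith
      · rw [max_eq_left h8] at h5
        have : κ * v (x ^ 4 - 8 * n * x) ≤ κ * W := by gcongr
        linarith
    calc _ ≤ κ * W * κ ^ 108 := by gcongr
      _ = κ ^ 109 * W := by ring
      _ ≤ _ := by gcongr <;> norm_num

end loc
end Moh

set_option linter.unnecessarySeqFocus false
namespace Moh
open Height AdmissibleAbsValues Real

section loc
variable {v : AbsoluteValue ℚ ℝ} {κ : ℝ}

/-- if `P` is close to the origin compared to `Q`, then `x(P+Q)` is bounded in terms of `Q`. -/
lemma loc_near (h : Qu v κ) {n x y a b x' : ℚ} {τ m : ℝ} (hτ : 0 < τ) (hn : τ ^ 3 = v n)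
    (hP : y ^ 2 = x ^ 3 + n) (hQ : b ^ 2 = a ^ 3 + n)
    (e : x' * (x - a) ^ 2 = a * x ^ 2 + a ^ 2 * x + 2 * n - 2 * b * y)
    (hm : τ ≤ m) (ha : v a ≤ m) (hx : κ ^ 2 * m < v x) : v x' ≤ κ ^ 10 * m := by
  have hκ := h.1
  have hκ0 : 0 < κ := by linarith
  have m0 : 0 < m := by linarith
  have k1 : ∀ i : ℕ, 1 ≤ κ ^ i := fun i => one_le_pow₀ hκ
  have hmx : m < v x := lt_of_le_of_lt (le_mul_of_one_le_left m0.le (k1 2)) hx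
  have x0 : 0 < v x := by linarith
  have a0 := v.nonneg a
  have hxa : v x ≤ κ * v (x - a) := by
    have h1 := h.2 (x - a) a
    rw [sub_add_cancel] at h1
    rcases le_total (v (x - a)) (v a) with h2 | h2
    · rw [max_eq_right h2] at h1
      exfalso
      have : κ * v a ≤ κ ^ 2 * m := by
        calc κ * v a ≤ κ * m := by gcongr
          _ ≤ κ * (κ * m) := by
            gcongr; exact le_mul_of_one_le_left m0.le hκ
          _ = _ := by ring
      linarith
    · rwa [max_eq_left h2] at h1
  have hy : v y ^ 2 ≤ κ * v x ^ 3 := by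
    rw [← v.map_pow, hP]
    apply h.add_le
    · rw [v.map_pow]
    · rw [← hn]; gcongr; linarith
  have hb : v b ^ 2 ≤ κ * m ^ 3 := by
    rw [← v.map_pow, hQ]
    apply h.add_le
    · rw [v.map_pow]; gcongr
    · rw [← hn]; gcongr
  have hby : v b * v y ≤ κ * m * v x ^ 2 := by
    refine (sq_le_sq₀ (by positivity) (by positivity)).1 ?_
    calc (v b * v y) ^ 2 = v b ^ 2 * v y ^ 2 := by ring
      _ ≤ (κ * m ^ 3) * (κ * v x ^ 3) := by gcongr
      _ = (κ ^ 2 * m ^ 2 * v x ^ 3) * m := by ring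
      _ ≤ (κ ^ 2 * m ^ 2 * v x ^ 3) * v x := by gcongr
      _ = _ := by ring
  have hr : v (a * x ^ 2 + a ^ 2 * x + 2 * n - 2 * b * y) ≤
      κ * (κ * (κ * (κ ^ 2 * (m * v x ^ 2)))) := by
    have t0 : 0 ≤ m * v x ^ 2 := by positivity
    have one : m * v x ^ 2 ≤ κ ^ 2 * (m * v x ^ 2) := le_mul_of_one_le_left t0 (k1 2)
    have up : ∀ t : ℝ, 0 ≤ t → t ≤ κ * t := fun t ht => le_mul_of_one_le_left ht hκ
    have s1 : v (a * x ^ 2 + a ^ 2 * x) ≤ κ * (κ ^ 2 * (m * v x ^ 2)) := by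
      apply h.add_le
      · rw [v.map_mul, v.map_pow]
        exact le_trans (by gcongr) one
      · rw [v.map_mul, v.map_pow]
        refine le_trans ?_ one
        calc v a ^ 2 * v x ≤ m ^ 2 * v x := by gcongr
          _ = m * v x * m := by ring
          _ ≤ m * v x * v x := by gcongr
          _ = _ := by ring
    have s2 : v (a * x ^ 2 + a ^ 2 * x + 2 * n) ≤ κ * (κ * (κ ^ 2 * (m * v x ^ 2))) := by
      apply h.add_le s1
      rw [v.map_mul, ← hn]
      have := h.two_le
      calc v 2 * τ ^ 3 ≤ κ * m ^ 3 := by gcongr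
        _ = κ * (m * m ^ 2) := by ring
        _ ≤ κ * (m * v x ^ 2) := by gcongr
        _ ≤ _ := by gcongr
    apply h.sub_le s2
    rw [v.map_mul, v.map_mul, mul_assoc]
    have := h.two_le
    calc v 2 * (v b * v y) ≤ κ * (κ * m * v x ^ 2) := by gcongr
      _ = κ ^ 2 * (m * v x ^ 2) := by ring
      _ ≤ _ := (up _ (by positivity)).trans (up _ (by positivity))
  rw [← e, v.map_mul, v.map_pow] at hr
  have : v x' * v x ^ 2 ≤ κ ^ 10 * m * v x ^ 2 := by
    calc v x' * v x ^ 2 ≤ v x' * (κ * v (x - a)) ^ 2 := by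
          have := v.nonneg x'
          gcongr
      _ = κ ^ 2 * (v x' * v (x - a) ^ 2) := by ring
      _ ≤ κ ^ 2 * (κ * (κ * (κ * (κ ^ 2 * (m * v x ^ 2))))) := by gcongr
      _ = κ ^ 7 * (m * v x ^ 2) := by ring
      _ ≤ κ ^ 10 * (m * v x ^ 2) := by gcongr <;> norm_num
      _ = _ := by ring
  exact le_of_mul_le_mul_right this (by positivity)

lemma loc_gap_x (h : Qu v κ) {n x y a₁ b₁ x₁ a₂ b₂ x₂ : ℚ} {τ m : ℝ} (hτ : 0 < τ)
    (hn : τ ^ 3 = v n) (hP : y ^ 2 = x ^ 3 + n)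
    (hQ₁ : b₁ ^ 2 = a₁ ^ 3 + n) (hQ₂ : b₂ ^ 2 = a₂ ^ 3 + n)
    (e₁ : x₁ * (x - a₁) ^ 2 = a₁ * x ^ 2 + a₁ ^ 2 * x + 2 * n - 2 * b₁ * y)
    (e₂ : x₂ * (x - a₂) ^ 2 = a₂ * x ^ 2 + a₂ ^ 2 * x + 2 * n - 2 * b₂ * y)
    (hm : τ ≤ m) (ha₁ : v a₁ ≤ m) (ha₂ : v a₂ ≤ m) (N : ℕ) (l₀ l₁ l₂ : ℤ)
    (h₀ : l₀.natAbs ≤ N) (h₁ : l₁.natAbs ≤ N) (h₂ : l₂.natAbs ≤ N)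
    (hl : l₀ * x = l₁ * x₁ + l₂ * x₂) :
    max (v x) τ * v l₀ ≤ κ ^ (N + 11) * m := by
  have hκ := h.1
  have hκ0 : 0 < κ := by linarith
  have m0 : 0 < m := by linarith
  have k1 : ∀ i : ℕ, 1 ≤ κ ^ i := fun i => one_le_pow₀ hκ
  have v0 := h.int_le l₀ N h₀
  have v1 := h.int_le l₁ N h₁
  have v2 := h.int_le l₂ N h₂
  by_cases hx : v x ≤ κ ^ 2 * m
  · have : max (v x) τ ≤ κ ^ 2 * m := max_le hx (hm.trans (le_mul_of_one_le_left m0.le (k1 2)))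
    calc _ ≤ κ ^ 2 * m * κ ^ N := by gcongr
      _ = κ ^ (N + 2) * m := by ring
      _ ≤ _ := by gcongr <;> norm_num
  · push Not at hx
    have c1 := loc_near h hτ hn hP hQ₁ e₁ hm ha₁ hx
    have c2 := loc_near h hτ hn hP hQ₂ e₂ hm ha₂ hx
    have hmx : m < v x := lt_of_le_of_lt (le_mul_of_one_le_left m0.le (k1 2)) hx
    rw [max_eq_left (by linarith), mul_comm, ← v.map_mul, hl]
    have : v (l₁ * x₁ + l₂ * x₂) ≤ κ * (κ ^ N * (κ ^ 10 * m)) := by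
      apply h.add_le <;> rw [v.map_mul] <;> gcongr
    exact this.trans (le_of_eq (by ring))

lemma loc_gap_y (h : Qu v κ) {n x y a₁ b₁ x₁ y₁ a₂ b₂ x₂ y₂ : ℚ} {τ m : ℝ} (hτ : 0 < τ)
    (hn : τ ^ 3 = v n) (hP : y ^ 2 = x ^ 3 + n)
    (hQ₁ : b₁ ^ 2 = a₁ ^ 3 + n) (hQ₂ : b₂ ^ 2 = a₂ ^ 3 + n)
    (hR₁ : y₁ ^ 2 = x₁ ^ 3 + n) (hR₂ : y₂ ^ 2 = x₂ ^ 3 + n)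
    (e₁ : x₁ * (x - a₁) ^ 2 = a₁ * x ^ 2 + a₁ ^ 2 * x + 2 * n - 2 * b₁ * y)
    (e₂ : x₂ * (x - a₂) ^ 2 = a₂ * x ^ 2 + a₂ ^ 2 * x + 2 * n - 2 * b₂ * y)
    (hm : τ ≤ m) (ha₁ : v a₁ ≤ m) (ha₂ : v a₂ ≤ m) (N : ℕ) (l₀ l₁ l₂ : ℤ)
    (h₀ : l₀.natAbs ≤ N) (h₁ : l₁.natAbs ≤ N) (h₂ : l₂.natAbs ≤ N)
    (hl : l₀ * y = l₁ * y₁ + l₂ * y₂) :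
    max (v x) τ ^ 3 * v l₀ ^ 2 ≤ κ ^ (2 * N + 40) * m ^ 3 := by
  have hκ := h.1
  have hκ0 : 0 < κ := by linarith
  have m0 : 0 < m := by linarith
  have k1 : ∀ i : ℕ, 1 ≤ κ ^ i := fun i => one_le_pow₀ hκ
  have v0 := h.int_le l₀ N h₀
  have v1 := h.int_le l₁ N h₁
  have v2 := h.int_le l₂ N h₂
  by_cases hx : v x ≤ κ ^ 2 * m
  · have : max (v x) τ ≤ κ ^ 2 * m := max_le hx (hm.trans (le_mul_of_one_le_left m0.le (k1 2)))
    calc _ ≤ (κ ^ 2 * m) ^ 3 * (κ ^ N) ^ 2 := by gcongr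
      _ = κ ^ (2 * N + 6) * m ^ 3 := by ring
      _ ≤ _ := by gcongr <;> norm_num
  · push Not at hx
    have c1 := loc_near h hτ hn hP hQ₁ e₁ hm ha₁ hx
    have c2 := loc_near h hτ hn hP hQ₂ e₂ hm ha₂ hx
    have hmx : m < v x := lt_of_le_of_lt (le_mul_of_one_le_left m0.le (k1 2)) hx
    rw [max_eq_left (by linarith)]
    have hyy : ∀ s t : ℚ, t ^ 2 = s ^ 3 + n → v s ≤ κ ^ 10 * m → v t ^ 2 ≤ κ ^ 31 * m ^ 3 := by
      intro s t hst hs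
      rw [← v.map_pow, hst]
      have : v (s ^ 3 + n) ≤ κ * ((κ ^ 10 * m) ^ 3) := by
        apply h.add_le
        · rw [v.map_pow]; gcongr
        · rw [← hn]; gcongr; exact hm.trans (le_mul_of_one_le_left m0.le (k1 10))
      exact this.trans (le_of_eq (by ring))
    have d1 := hyy _ _ hR₁ c1
    have d2 := hyy _ _ hR₂ c2
    have hy : (v l₀ * v y) ^ 2 ≤ κ ^ 2 * (κ ^ (2 * N) * (κ ^ 31 * m ^ 3)) := by
      rw [← v.map_mul, hl]
      have A := h.2 (l₁ * y₁) (l₂ * y₂)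
      have B : max (v (l₁ * y₁)) (v (l₂ * y₂)) ^ 2 ≤ κ ^ (2 * N) * (κ ^ 31 * m ^ 3) := by
        rcases le_total (v (l₁ * y₁)) (v (l₂ * y₂)) with hh | hh
        · rw [max_eq_right hh, v.map_mul, mul_pow]
          calc _ ≤ (κ ^ N) ^ 2 * (κ ^ 31 * m ^ 3) := by gcongr
            _ = _ := by ring
        · rw [max_eq_left hh, v.map_mul, mul_pow]
          calc _ ≤ (κ ^ N) ^ 2 * (κ ^ 31 * m ^ 3) := by gcongr
            _ = _ := by ring
      calc _ ≤ (κ * max (v (l₁ * y₁)) (v (l₂ * y₂))) ^ 2 := by gcongr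
        _ = κ ^ 2 * max (v (l₁ * y₁)) (v (l₂ * y₂)) ^ 2 := by ring
        _ ≤ _ := by gcongr
    have hx3 : v x ^ 3 ≤ κ * v y ^ 2 := by
      have A := h.2 (y ^ 2) (-n)
      rw [show y ^ 2 + -n = x ^ 3 by rw [hP]; ring, v.map_neg, v.map_pow, v.map_pow, ← hn] at A
      rcases le_total (v y ^ 2) (τ ^ 3) with hh | hh
      · rw [max_eq_right hh] at A
        exfalso
        have : κ * τ ^ 3 < v x ^ 3 := by
          calc κ * τ ^ 3 ≤ κ ^ 6 * τ ^ 3 := by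
                gcongr
                calc κ = κ ^ 1 := by ring
                  _ ≤ κ ^ 6 := by gcongr <;> norm_num
            _ = (κ ^ 2 * τ) ^ 3 := by ring
            _ ≤ (κ ^ 2 * m) ^ 3 := by gcongr
            _ < _ := by gcongr
        linarith
      · rwa [max_eq_left hh] at A
    calc _ ≤ κ * v y ^ 2 * v l₀ ^ 2 := by gcongr
      _ = κ * (v l₀ * v y) ^ 2 := by ring
      _ ≤ κ * (κ ^ 2 * (κ ^ (2 * N) * (κ ^ 31 * m ^ 3))) := by gcongr
      _ = κ ^ (2 * N + 34) * m ^ 3 := by ring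
      _ ≤ _ := by gcongr <;> norm_num

lemma loc_int_x (h : Qu v κ) {x x₁ x₂ : ℚ} {τ m : ℝ} (hτ : 0 < τ)
    (hm : τ ≤ m) (ha₁ : v x₁ ≤ m) (ha₂ : v x₂ ≤ m) (N : ℕ) (l₀ l₁ l₂ : ℤ)
    (h₀ : l₀.natAbs ≤ N) (h₁ : l₁.natAbs ≤ N) (h₂ : l₂.natAbs ≤ N)
    (hl : l₀ * x = l₁ * x₁ + l₂ * x₂) :
    max (v x) τ * v l₀ ≤ κ ^ (N + 11) * m := by
  have hκ := h.1
  have hκ0 : 0 < κ := by linarith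
  have m0 : 0 < m := by linarith
  have v0 := h.int_le l₀ N h₀
  have v1 := h.int_le l₁ N h₁
  have v2 := h.int_le l₂ N h₂
  rw [max_mul_of_nonneg _ _ (v.nonneg _)]
  apply max_le
  · rw [mul_comm, ← v.map_mul, hl]
    have : v (l₁ * x₁ + l₂ * x₂) ≤ κ * (κ ^ N * m) := by
      apply h.add_le <;> rw [v.map_mul] <;> gcongr
    calc _ ≤ _ := this
      _ = κ ^ (N + 1) * m := by ring
      _ ≤ _ := by gcongr <;> norm_num
  · calc _ ≤ m * κ ^ N := by gcongr
      _ = κ ^ N * m := by ring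
      _ ≤ _ := by gcongr <;> norm_num

lemma loc_int_y (h : Qu v κ) {n x y x₁ y₁ x₂ y₂ : ℚ} {τ m : ℝ} (hτ : 0 < τ)
    (hn : τ ^ 3 = v n) (hP : y ^ 2 = x ^ 3 + n)
    (hR₁ : y₁ ^ 2 = x₁ ^ 3 + n) (hR₂ : y₂ ^ 2 = x₂ ^ 3 + n)
    (hm : τ ≤ m) (ha₁ : v x₁ ≤ m) (ha₂ : v x₂ ≤ m) (N : ℕ) (l₀ l₁ l₂ : ℤ)
    (h₀ : l₀.natAbs ≤ N) (h₁ : l₁.natAbs ≤ N) (h₂ : l₂.natAbs ≤ N)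
    (hl : l₀ * y = l₁ * y₁ + l₂ * y₂) :
    max (v x) τ ^ 3 * v l₀ ^ 2 ≤ κ ^ (2 * N + 40) * m ^ 3 := by
  have hκ := h.1
  have hκ0 : 0 < κ := by linarith
  have m0 : 0 < m := by linarith
  have k1 : ∀ i : ℕ, 1 ≤ κ ^ i := fun i => one_le_pow₀ hκ
  have v0 := h.int_le l₀ N h₀
  have v1 := h.int_le l₁ N h₁
  have v2 := h.int_le l₂ N h₂
  have hyy : ∀ s t : ℚ, t ^ 2 = s ^ 3 + n → v s ≤ m → v t ^ 2 ≤ κ * m ^ 3 := by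
    intro s t hst hs
    rw [← v.map_pow, hst]
    apply h.add_le
    · rw [v.map_pow]; gcongr
    · rw [← hn]; gcongr
  have d1 := hyy _ _ hR₁ ha₁
  have d2 := hyy _ _ hR₂ ha₂
  have hy : (v l₀ * v y) ^ 2 ≤ κ ^ 2 * (κ ^ (2 * N) * (κ * m ^ 3)) := by
    rw [← v.map_mul, hl]
    have A := h.2 (l₁ * y₁) (l₂ * y₂)
    have B : max (v (l₁ * y₁)) (v (l₂ * y₂)) ^ 2 ≤ κ ^ (2 * N) * (κ * m ^ 3) := by
      rcases le_total (v (l₁ * y₁)) (v (l₂ * y₂)) with hh | hh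
      · rw [max_eq_right hh, v.map_mul, mul_pow]
        calc _ ≤ (κ ^ N) ^ 2 * (κ * m ^ 3) := by gcongr
          _ = _ := by ring
      · rw [max_eq_left hh, v.map_mul, mul_pow]
        calc _ ≤ (κ ^ N) ^ 2 * (κ * m ^ 3) := by gcongr
          _ = _ := by ring
    calc _ ≤ (κ * max (v (l₁ * y₁)) (v (l₂ * y₂))) ^ 2 := by gcongr
      _ = κ ^ 2 * max (v (l₁ * y₁)) (v (l₂ * y₂)) ^ 2 := by ring
      _ ≤ _ := by gcongr
  have hx3 : max (v x) τ ^ 3 ≤ κ * max (v y ^ 2) (m ^ 3) := by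
    rcases le_total (v x) τ with hh | hh
    · rw [max_eq_right hh]
      calc τ ^ 3 ≤ m ^ 3 := by gcongr
        _ ≤ max (v y ^ 2) (m ^ 3) := le_max_right _ _
        _ ≤ _ := le_mul_of_one_le_left (by positivity) hκ
    · rw [max_eq_left hh]
      have A := h.2 (y ^ 2) (-n)
      rw [show y ^ 2 + -n = x ^ 3 by rw [hP]; ring, v.map_neg, v.map_pow, v.map_pow, ← hn] at A
      exact A.trans (by gcongr)
  have B : max (v y ^ 2) (m ^ 3) * v l₀ ^ 2 ≤ κ ^ (2 * N + 3) * m ^ 3 := by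
    rw [max_mul_of_nonneg _ _ (by positivity)]
    apply max_le
    · calc _ = (v l₀ * v y) ^ 2 := by ring
        _ ≤ _ := hy
        _ = _ := by ring
    · calc _ ≤ m ^ 3 * (κ ^ N) ^ 2 := by gcongr
        _ = κ ^ (2 * N) * m ^ 3 := by ring
        _ ≤ _ := by gcongr <;> norm_num
  calc _ ≤ κ * max (v y ^ 2) (m ^ 3) * v l₀ ^ 2 := by gcongr
    _ = κ * (max (v y ^ 2) (m ^ 3) * v l₀ ^ 2) := by ring
    _ ≤ κ * (κ ^ (2 * N + 3) * m ^ 3) := by gcongr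
    _ = κ ^ (2 * N + 4) * m ^ 3 := by ring
    _ ≤ _ := by gcongr <;> norm_num

end loc
end Moh

set_option linter.unnecessarySeqFocus false
namespace Moh
open Height AdmissibleAbsValues Real

/-- the twisted naive height of an `x`-coordinate on `y² = x³ + n` -/
noncomputable def hh (n x : ℚ) : ℝ := logHeight₁ (x ^ 3 / n)

lemma hh_nonneg (n x : ℚ) : 0 ≤ hh n x := zero_le_logHeight₁ _

lemma glob_add {n x₁ x₂ x₃ x₄ : ℚ} (hn0 : n ≠ 0) (hne : x₁ ≠ x₂)
    (e1 : (x₃ + x₄) * (x₁ - x₂) ^ 2 = 2 * x₁ * x₂ * (x₁ + x₂) + 4 * n)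
    (e2 : x₃ * x₄ * (x₁ - x₂) ^ 2 = (x₁ * x₂) ^ 2 - 4 * n * (x₁ + x₂)) :
    hh n x₃ + hh n x₄ ≤ 2 * hh n x₁ + 2 * hh n x₂ + 15 * log 2 := by
  have hs : ((x₁ - x₂) ^ 2) ^ 3 / n ^ 2 ≠ 0 := by
    have := sub_ne_zero.2 hne
    positivity
  have := global_le [x₃ ^ 3 / n, x₄ ^ 3 / n]
    [x₁ ^ 3 / n, x₁ ^ 3 / n, x₂ ^ 3 / n, x₂ ^ 3 / n] _ hs 15 (by
      intro v κ h
      obtain ⟨τ, hτ, hn⟩ := exists_tau v hn0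
      simp only [lp_cons, lp_nil, max_eq n _ τ hτ hn]
      simp only [map_div₀, v.map_pow, ← hn]
      have L := loc_add h hτ hn e1 e2
      have hκ := h.1
      calc _ = (max (v x₃) τ * max (v x₄) τ * v (x₁ - x₂) ^ 2) ^ 3 / τ ^ 12 := by
            field_simp
        _ ≤ (κ ^ 5 * (max (v x₁) τ * max (v x₂) τ) ^ 2) ^ 3 / τ ^ 12 := by
            have := v.nonneg (x₁ - x₂)
            gcongr
        _ = _ := by field_simp)
  simp only [List.map_cons, List.map_nil, List.sum_cons, List.sum_nil] at this
  unfold hh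
  push_cast at this
  linarith

lemma glob_dbl_le {n x x' : ℚ} (hn0 : n ≠ 0) (hne : x ^ 3 + n ≠ 0)
    (e : x' * (4 * (x ^ 3 + n)) = x ^ 4 - 8 * n * x) :
    hh n x' ≤ 4 * hh n x + 12 * log 2 := by
  have hs : (4 * (x ^ 3 + n)) ^ 3 / n ^ 3 ≠ 0 := by positivity
  have := global_le [x' ^ 3 / n]
    [x ^ 3 / n, x ^ 3 / n, x ^ 3 / n, x ^ 3 / n] _ hs 12 (by
      intro v κ h
      obtain ⟨τ, hτ, hn⟩ := exists_tau v hn0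
      simp only [lp_cons, lp_nil, max_eq n _ τ hτ hn]
      rw [map_div₀, v.map_pow, v.map_pow, ← hn]
      have L := loc_dbl_le h hτ hn e
      have hκ := h.1
      calc _ = (max (v x') τ * v (4 * (x ^ 3 + n))) ^ 3 / τ ^ 12 := by
            field_simp
        _ ≤ (κ ^ 4 * (max (v x) τ) ^ 4) ^ 3 / τ ^ 12 := by
            gcongr
        _ = _ := by field_simp)
  simp only [List.map_cons, List.map_nil, List.sum_cons, List.sum_nil] at this
  unfold hh
  push_cast at this
  linarith

lemma glob_dbl_ge {n x x' : ℚ} (hn0 : n ≠ 0) (hne : x ^ 3 + n ≠ 0)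
    (e : x' * (4 * (x ^ 3 + n)) = x ^ 4 - 8 * n * x) :
    4 * hh n x ≤ hh n x' + 600 * log 2 := by
  have hs : 108 ^ 3 * n ^ 3 / (4 * (x ^ 3 + n)) ^ 3 ≠ 0 := by positivity
  have := global_le 
    [x ^ 3 / n, x ^ 3 / n, x ^ 3 / n, x ^ 3 / n] [x' ^ 3 / n] _ hs 600 (by
      intro v κ h
      obtain ⟨τ, hτ, hn⟩ := exists_tau v hn0
      simp only [lp_cons, lp_nil, max_eq n _ τ hτ hn]
      rw [map_div₀, v.map_mul, v.map_pow, v.map_pow n, v.map_pow (4 * (x ^ 3 + n)), ← hn]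
      have L := loc_dbl_ge h hτ hn e
      have hκ := h.1
      have hW : 0 < v (4 * (x ^ 3 + n)) := v.pos (by positivity)
      set W := v (4 * (x ^ 3 + n))
      calc _ = ((max (v x) τ) ^ 4 * v 108) ^ 3 / (τ ^ 3 * W ^ 3) := by
            field_simp
        _ ≤ (κ ^ 200 * (max (v x') τ * W)) ^ 3 / (τ ^ 3 * W ^ 3) := by
            gcongr
        _ = _ := by field_simp)
  simp only [List.map_cons, List.map_nil, List.sum_cons, List.sum_nil] at this
  unfold hh
  push_cast at this
  linarith

lemma mtau {M₁ M₂ τ : ℝ} (hτ : 0 < τ) (h1 : τ ≤ M₁) (h2 : τ ≤ M₂) :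
    max M₁ M₂ * τ ≤ M₁ * M₂ := by
  rcases le_total M₁ M₂ with h | h
  · rw [max_eq_right h, mul_comm]; exact mul_le_mul_of_nonneg_right h1 (by linarith)
  · rw [max_eq_left h]; exact mul_le_mul_of_nonneg_left h2 (by linarith)

/-- deducing a global bound from a local one of the form occurring in `loc_gap_x` etc. -/
lemma glob_of_x {n x a₁ a₂ : ℚ} (hn0 : n ≠ 0) (N : ℕ) (l₀ : ℤ) (hl : l₀ ≠ 0)
    (H : ∀ v κ, Qu v κ → ∀ τ m : ℝ, 0 < τ → τ ^ 3 = v n → τ ≤ m → v a₁ ≤ m → v a₂ ≤ m →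
      max (v x) τ ^ 3 * v l₀ ^ 3 ≤ κ ^ N * m ^ 3) :
    hh n x ≤ hh n a₁ + hh n a₂ + N * log 2 := by
  have hs : (l₀ : ℚ) ^ 3 ≠ 0 := by positivity
  have := global_le [x ^ 3 / n] [a₁ ^ 3 / n, a₂ ^ 3 / n] _ hs N (by
      intro v κ h
      obtain ⟨τ, hτ, hn⟩ := exists_tau v hn0
      simp only [lp_cons, lp_nil, max_eq n _ τ hτ hn, v.map_pow]
      have L := H v κ h τ (max (max (v a₁) τ) (max (v a₂) τ)) hτ hn
        ((le_max_right _ _).trans (le_max_left _ _)) ((le_max_left _ _).trans (le_max_left _ _))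
        ((le_max_left _ _).trans (le_max_right _ _))
      have T := mtau hτ (le_max_right (v a₁) τ) (le_max_right (v a₂) τ)
      have hκ := h.1
      set m := max (max (v a₁) τ) (max (v a₂) τ)
      have hm : 0 < m := lt_of_lt_of_le hτ ((le_max_right _ _).trans (le_max_left _ _))
      calc _ = (max (v x) τ ^ 3 * v l₀ ^ 3) / τ ^ 3 := by field_simp
        _ ≤ κ ^ N * m ^ 3 / τ ^ 3 := by gcongr
        _ = κ ^ N * (m * τ) ^ 3 / τ ^ 6 := by field_simp
        _ ≤ κ ^ N * (max (v a₁) τ * max (v a₂) τ) ^ 3 / τ ^ 6 := by gcongr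
        _ = _ := by field_simp)
  simp only [List.map_cons, List.map_nil, List.sum_cons, List.sum_nil] at this
  unfold hh
  linarith

lemma glob_of_y {n x a₁ a₂ : ℚ} (hn0 : n ≠ 0) (N : ℕ) (l₀ : ℤ) (hl : l₀ ≠ 0)
    (H : ∀ v κ, Qu v κ → ∀ τ m : ℝ, 0 < τ → τ ^ 3 = v n → τ ≤ m → v a₁ ≤ m → v a₂ ≤ m →
      max (v x) τ ^ 3 * v l₀ ^ 2 ≤ κ ^ N * m ^ 3) :
    hh n x ≤ hh n a₁ + hh n a₂ + N * log 2 := by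
  have hs : (l₀ : ℚ) ^ 2 ≠ 0 := by positivity
  have := global_le [x ^ 3 / n] [a₁ ^ 3 / n, a₂ ^ 3 / n] _ hs N (by
      intro v κ h
      obtain ⟨τ, hτ, hn⟩ := exists_tau v hn0
      simp only [lp_cons, lp_nil, max_eq n _ τ hτ hn, v.map_pow]
      have L := H v κ h τ (max (max (v a₁) τ) (max (v a₂) τ)) hτ hn
        ((le_max_right _ _).trans (le_max_left _ _)) ((le_max_left _ _).trans (le_max_left _ _))
        ((le_max_left _ _).trans (le_max_right _ _))
      have T := mtau hτ (le_max_right (v a₁) τ) (le_max_right (v a₂) τ)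
      have hκ := h.1
      set m := max (max (v a₁) τ) (max (v a₂) τ)
      have hm : 0 < m := lt_of_lt_of_le hτ ((le_max_right _ _).trans (le_max_left _ _))
      calc _ = (max (v x) τ ^ 3 * v l₀ ^ 2) / τ ^ 3 := by field_simp
        _ ≤ κ ^ N * m ^ 3 / τ ^ 3 := by gcongr
        _ = κ ^ N * (m * τ) ^ 3 / τ ^ 6 := by field_simp
        _ ≤ κ ^ N * (max (v a₁) τ * max (v a₂) τ) ^ 3 / τ ^ 6 := by gcongr
        _ = _ := by field_simp)
  simp only [List.map_cons, List.map_nil, List.sum_cons, List.sum_nil] at this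
  unfold hh
  linarith

lemma cube_le {A B C : ℝ} {κ : ℝ} {N : ℕ} (hA : 0 ≤ A) (hB : 0 ≤ B) (h : A * B ≤ κ ^ N * C) :
    A ^ 3 * B ^ 3 ≤ κ ^ (3 * N) * C ^ 3 := by
  calc _ = (A * B) ^ 3 := by ring
    _ ≤ (κ ^ N * C) ^ 3 := by gcongr
    _ = _ := by ring

lemma glob_gap_x {n x y a₁ b₁ x₁ a₂ b₂ x₂ : ℚ} (hn0 : n ≠ 0) (hP : y ^ 2 = x ^ 3 + n)
    (hQ₁ : b₁ ^ 2 = a₁ ^ 3 + n) (hQ₂ : b₂ ^ 2 = a₂ ^ 3 + n)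
    (e₁ : x₁ * (x - a₁) ^ 2 = a₁ * x ^ 2 + a₁ ^ 2 * x + 2 * n - 2 * b₁ * y)
    (e₂ : x₂ * (x - a₂) ^ 2 = a₂ * x ^ 2 + a₂ ^ 2 * x + 2 * n - 2 * b₂ * y)
    (N : ℕ) (l₀ l₁ l₂ : ℤ) (h0 : l₀ ≠ 0)
    (h₀ : l₀.natAbs ≤ N) (h₁ : l₁.natAbs ≤ N) (h₂ : l₂.natAbs ≤ N)
    (hl : l₀ * x = l₁ * x₁ + l₂ * x₂) :
    hh n x ≤ hh n a₁ + hh n a₂ + (3 * (N + 11) : ℕ) * log 2 := by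
  apply glob_of_x hn0 _ l₀ h0
  intro v κ h τ m hτ hn hm ha₁ ha₂
  exact cube_le (by positivity) (v.nonneg _)
    (loc_gap_x h hτ hn hP hQ₁ hQ₂ e₁ e₂ hm ha₁ ha₂ N l₀ l₁ l₂ h₀ h₁ h₂ hl)

lemma glob_gap_y {n x y a₁ b₁ x₁ y₁ a₂ b₂ x₂ y₂ : ℚ} (hn0 : n ≠ 0) (hP : y ^ 2 = x ^ 3 + n)
    (hQ₁ : b₁ ^ 2 = a₁ ^ 3 + n) (hQ₂ : b₂ ^ 2 = a₂ ^ 3 + n)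
    (hR₁ : y₁ ^ 2 = x₁ ^ 3 + n) (hR₂ : y₂ ^ 2 = x₂ ^ 3 + n)
    (e₁ : x₁ * (x - a₁) ^ 2 = a₁ * x ^ 2 + a₁ ^ 2 * x + 2 * n - 2 * b₁ * y)
    (e₂ : x₂ * (x - a₂) ^ 2 = a₂ * x ^ 2 + a₂ ^ 2 * x + 2 * n - 2 * b₂ * y)
    (N : ℕ) (l₀ l₁ l₂ : ℤ) (h0 : l₀ ≠ 0)
    (h₀ : l₀.natAbs ≤ N) (h₁ : l₁.natAbs ≤ N) (h₂ : l₂.natAbs ≤ N)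
    (hl : l₀ * y = l₁ * y₁ + l₂ * y₂) :
    hh n x ≤ hh n a₁ + hh n a₂ + (3 * (N + 20) : ℕ) * log 2 := by
  apply glob_of_y hn0 _ l₀ h0
  intro v κ h τ m hτ hn hm ha₁ ha₂
  have hκ := h.1
  have := loc_gap_y h hτ hn hP hQ₁ hQ₂ hR₁ hR₂ e₁ e₂ hm ha₁ ha₂ N l₀ l₁ l₂ h₀ h₁ h₂ hl
  have m0 : 0 < m := by linarith
  refine this.trans ?_
  gcongr
  omega

lemma glob_int_x {n x x₁ x₂ : ℚ} (hn0 : n ≠ 0) 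
    (N : ℕ) (l₀ l₁ l₂ : ℤ) (h0 : l₀ ≠ 0)
    (h₀ : l₀.natAbs ≤ N) (h₁ : l₁.natAbs ≤ N) (h₂ : l₂.natAbs ≤ N)
    (hl : l₀ * x = l₁ * x₁ + l₂ * x₂) :
    hh n x ≤ hh n x₁ + hh n x₂ + (3 * (N + 11) : ℕ) * log 2 := by
  apply glob_of_x hn0 _ l₀ h0
  intro v κ h τ m hτ hn hm ha₁ ha₂
  exact cube_le (by positivity) (v.nonneg _)
    (loc_int_x h hτ hm ha₁ ha₂ N l₀ l₁ l₂ h₀ h₁ h₂ hl)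

lemma glob_int_y {n x y x₁ y₁ x₂ y₂ : ℚ} (hn0 : n ≠ 0) (hP : y ^ 2 = x ^ 3 + n)
    (hR₁ : y₁ ^ 2 = x₁ ^ 3 + n) (hR₂ : y₂ ^ 2 = x₂ ^ 3 + n)
    (N : ℕ) (l₀ l₁ l₂ : ℤ) (h0 : l₀ ≠ 0)
    (h₀ : l₀.natAbs ≤ N) (h₁ : l₁.natAbs ≤ N) (h₂ : l₂.natAbs ≤ N)
    (hl : l₀ * y = l₁ * y₁ + l₂ * y₂) :
    hh n x ≤ hh n x₁ + hh n x₂ + (3 * (N + 20) : ℕ) * log 2 := by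
  apply glob_of_y hn0 _ l₀ h0
  intro v κ h τ m hτ hn hm ha₁ ha₂
  have hκ := h.1
  have := loc_int_y h hτ hn hP hR₁ hR₂ hm ha₁ ha₂ N l₀ l₁ l₂ h₀ h₁ h₂ hl
  have m0 : 0 < m := by linarith
  refine this.trans ?_
  gcongr
  omega

end Moh

set_option linter.unnecessarySeqFocus false
namespace Moh
open Height AdmissibleAbsValues Real WeierstrassCurve

/-- rational points of the Mordell curve -/
abbrev Pt (n : ℤ) := (MordellCurve n).toAffine.Point

section
variable {n : ℤ}

lemma nons (hn : n ≠ 0) {x y : ℚ} :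
    (MordellCurve n).toAffine.Nonsingular x y ↔ y ^ 2 = x ^ 3 + n := by
  rw [Affine.nonsingular_iff, Affine.equation_iff]
  simp only [MordellCurve]
  constructor
  · rintro ⟨h, -⟩; linarith
  · intro h
    refine ⟨by linarith, ?_⟩
    by_contra hc
    push Not at hc
    obtain ⟨h1, h2⟩ := hc
    have hx : x = 0 := by
      have : x ^ 2 = 0 := by linarith
      exact pow_eq_zero_iff (two_ne_zero) |>.1 this
    have hy : y = 0 := by linarith
    rw [hx, hy] at h
    have : (n : ℚ) = 0 := by linarith
    exact hn (by exact_mod_cast this)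

lemma eqn (x y : ℚ) (h : (MordellCurve n).toAffine.Nonsingular x y) : y ^ 2 = x ^ 3 + n := by
  have := h.1
  rw [Affine.equation_iff] at this
  simp only [MordellCurve] at this
  linarith

lemma negY_eq (x y : ℚ) : (MordellCurve n).toAffine.negY x y = -y := by
  simp [Affine.negY, MordellCurve]

lemma neg_pt {x y : ℚ} (h : (MordellCurve n).toAffine.Nonsingular x y) :
    ∃ h', -(Affine.Point.some x y h : Pt n) = Affine.Point.some x (-y) h' := by
  have := Affine.Point.neg_some h
  rw [this]
  have e := negY_eq (n := n) x y
  refine ⟨by rw [← e]; exact (Affine.nonsingular_neg ..).mpr h, ?_⟩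
  simp [MordellCurve]

lemma add_ne {x₁ y₁ x₂ y₂ : ℚ} (h₁ : (MordellCurve n).toAffine.Nonsingular x₁ y₁)
    (h₂ : (MordellCurve n).toAffine.Nonsingular x₂ y₂) (hx : x₁ ≠ x₂) :
    ∃ x₃ y₃ h₃, (Affine.Point.some x₁ y₁ h₁ : Pt n) + Affine.Point.some x₂ y₂ h₂ =
      Affine.Point.some x₃ y₃ h₃ ∧ x₃ = ((y₁ - y₂) / (x₁ - x₂)) ^ 2 - x₁ - x₂ ∧
      y₃ = - ((y₁ - y₂) / (x₁ - x₂) * (x₃ - x₁) + y₁) := by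
  rw [Affine.Point.add_of_X_ne hx]
  refine ⟨_, _, _, rfl, ?_, ?_⟩
  · rw [Affine.slope_of_X_ne hx]; simp [Affine.addX, MordellCurve]
  · rw [Affine.slope_of_X_ne hx]; simp [Affine.addY, Affine.negAddY, Affine.negY, MordellCurve]

lemma add_dbl {x y : ℚ} (h : (MordellCurve n).toAffine.Nonsingular x y) (hy : y ≠ 0) :
    ∃ x₃ y₃ h₃, (Affine.Point.some x y h : Pt n) + Affine.Point.some x y h =
      Affine.Point.some x₃ y₃ h₃ ∧ x₃ = (3 * x ^ 2 / (2 * y)) ^ 2 - x - x ∧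
      y₃ = - (3 * x ^ 2 / (2 * y) * (x₃ - x) + y) := by
  have hy' : y ≠ (MordellCurve n).toAffine.negY x y := by
    rw [negY_eq]; intro hc; apply hy; linarith
  rw [Affine.Point.add_self_of_Y_ne hy']
  have e : (MordellCurve n).toAffine.slope x x y y = 3 * x ^ 2 / (2 * y) := by
    rw [Affine.slope_of_Y_ne rfl hy', negY_eq]; simp [MordellCurve]; ring
  refine ⟨_, _, _, rfl, ?_, ?_⟩
  · rw [e]; simp [Affine.addX, MordellCurve]
  · rw [e]; simp [Affine.addY, Affine.negAddY, Affine.negY, MordellCurve]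

lemma add_opp {x y₁ y₂ : ℚ} (h₁ : (MordellCurve n).toAffine.Nonsingular x y₁)
    (h₂ : (MordellCurve n).toAffine.Nonsingular x y₂) (hy : y₁ = - y₂) :
    (Affine.Point.some x y₁ h₁ : Pt n) + Affine.Point.some x y₂ h₂ = 0 :=
  Affine.Point.add_of_Y_eq rfl (by rw [negY_eq, hy])

lemma y_or {x y₁ y₂ : ℚ} (h₁ : (MordellCurve n).toAffine.Nonsingular x y₁)
    (h₂ : (MordellCurve n).toAffine.Nonsingular x y₂) : y₁ = y₂ ∨ y₁ = - y₂ :=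
  sq_eq_sq_iff_eq_or_eq_neg.1 ((eqn _ _ h₁).trans (eqn _ _ h₂).symm)

/-- the algebraic relation for the `x`-coordinate of a sum. -/
lemma add_rel {x y a b x' y' : ℚ} {h h₁ h₂}
    (e : (Affine.Point.some x y h : Pt n) + Affine.Point.some a b h₁ = Affine.Point.some x' y' h₂) :
    x' * (x - a) ^ 2 = a * x ^ 2 + a ^ 2 * x + 2 * n - 2 * b * y := by
  have E1 := eqn _ _ h
  have E2 := eqn _ _ h₁
  by_cases hx : x = a
  · subst hx
    rcases y_or h h₁ with hy | hy
    · rw [← hy]; linear_combination 2 * E1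
    · rw [add_opp h h₁ hy] at e
      exact absurd e.symm (Affine.Point.some_ne_zero _)
  · obtain ⟨x₃, y₃, h₃, e', ex, -⟩ := add_ne h h₁ hx
    rw [e', Affine.Point.some.injEq] at e
    rw [← e.1, ex]
    have := sub_ne_zero.2 hx
    field_simp
    linear_combination E1 + E2

/-- height of a point -/
noncomputable def ht : Pt n → ℝ
  | .zero => 0
  | .some x _ _ => hh n x

@[simp] lemma ht_zero : ht (0 : Pt n) = 0 := rfl
@[simp] lemma ht_some (x y : ℚ) (h) : ht (Affine.Point.some x y h : Pt n) = hh n x := rfl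

lemma ht_nonneg (P : Pt n) : 0 ≤ ht P := by
  rcases P with _ | ⟨x, y, h⟩
  · exact le_rfl
  · exact hh_nonneg _ _

lemma ht_neg (P : Pt n) : ht (-P) = ht P := by
  rcases P with _ | ⟨x, y, h⟩
  · rfl
  · obtain ⟨h', e⟩ := neg_pt h
    rw [e]; rfl

/-- the absolute constant in the height estimates -/
noncomputable def Ch : ℝ := 600 * log 2

lemma Ch_nonneg : 0 ≤ Ch := by unfold Ch; have := log_nonneg (one_le_two (α := ℝ)); positivity

lemma ht_dbl_aux {x y x₃ : ℚ} (h : (MordellCurve n).toAffine.Nonsingular x y) (hy : y ≠ 0)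
    (ex : x₃ = (3 * x ^ 2 / (2 * y)) ^ 2 - x - x) :
    x ^ 3 + n ≠ 0 ∧ x₃ * (4 * (x ^ 3 + n)) = x ^ 4 - 8 * n * x := by
  have E := eqn _ _ h
  rw [← E, ex]
  refine ⟨by positivity, ?_⟩
  have hn : (n : ℚ) = y ^ 2 - x ^ 3 := by linarith
  rw [hn]
  field_simp
  ring

lemma hh_two_tors (hn : n ≠ 0) {x : ℚ} (h : x ^ 3 + n = 0) : hh n x = 0 := by
  have hn' : (n : ℚ) ≠ 0 := by exact_mod_cast hn
  unfold hh
  have : x ^ 3 / n = -1 := by rw [div_eq_iff hn']; linarith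
  rw [this, logHeight₁_neg, logHeight₁_one]

lemma ht_dbl_le (hn : n ≠ 0) (P : Pt n) : ht (P + P) ≤ 4 * ht P + Ch := by
  have hl := log_nonneg (one_le_two (α := ℝ))
  rcases P with _ | ⟨x, y, h⟩
  · simp [← Affine.Point.zero_def, Ch_nonneg]
  · by_cases hy : y = 0
    · rw [add_opp h h (by rw [hy, neg_zero]), ht_zero]
      have := ht_nonneg (Affine.Point.some x y h)
      have := Ch_nonneg
      positivity
    · obtain ⟨x₃, y₃, h₃, e, ex, -⟩ := add_dbl h hy
      obtain ⟨h0, h1⟩ := ht_dbl_aux h hy ex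
      rw [e]
      simp only [ht_some, Ch]
      have := glob_dbl_le (by exact_mod_cast hn) h0 h1
      linarith

lemma ht_dbl_ge (hn : n ≠ 0) (P : Pt n) : 4 * ht P ≤ ht (P + P) + Ch := by
  rcases P with _ | ⟨x, y, h⟩
  · simp [← Affine.Point.zero_def, Ch_nonneg]
  · by_cases hy : y = 0
    · rw [add_opp h h (by rw [hy, neg_zero]), ht_zero, ht_some, hh_two_tors hn]
      · have := Ch_nonneg; linarith
      · rw [← eqn _ _ h, hy]; ring
    · obtain ⟨x₃, y₃, h₃, e, ex, -⟩ := add_dbl h hy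
      obtain ⟨h0, h1⟩ := ht_dbl_aux h hy ex
      rw [e]
      simp only [ht_some, Ch]
      exact glob_dbl_ge (by exact_mod_cast hn) h0 h1

lemma ht_upper (hn : n ≠ 0) (P Q : Pt n) :
    ht (P + Q) + ht (P - Q) ≤ 2 * (ht P + ht Q) + Ch := by
  have hl := log_nonneg (one_le_two (α := ℝ))
  rcases P with _ | ⟨x₁, y₁, h₁⟩
  · rw [← Affine.Point.zero_def, zero_add, zero_sub, ht_neg, ht_zero]
    have := Ch_nonneg
    linarith
  rcases Q with _ | ⟨x₂, y₂, h₂⟩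
  · rw [← Affine.Point.zero_def, add_zero, sub_zero, ht_zero]
    have := Ch_nonneg
    linarith
  have tot : ∀ P : Pt n, ht (P + P) + ht (P - P) ≤ 2 * (ht P + ht P) + Ch := by
    intro P
    rw [sub_self, ht_zero]
    have := ht_dbl_le hn P
    linarith
  by_cases hx : x₁ = x₂
  · subst hx
    rcases y_or h₁ h₂ with hy | hy
    · subst hy
      exact tot _
    · obtain ⟨h', e⟩ := neg_pt h₁
      have e2 : (Affine.Point.some x₁ y₂ h₂ : Pt n) = -(Affine.Point.some x₁ y₁ h₁ : Pt n) := by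
        rw [e]; simp [hy]
      rw [e2, ht_neg, sub_neg_eq_add, add_comm (ht _) (ht _), ← sub_eq_add_neg]
      exact tot _
  · obtain ⟨h', e⟩ := neg_pt h₂
    obtain ⟨x₃, y₃, h₃, e3, ex3, -⟩ := add_ne h₁ h₂ hx
    obtain ⟨x₄, y₄, h₄, e4, ex4, -⟩ := add_ne h₁ h' hx
    rw [sub_eq_add_neg, e, e3, e4]
    simp only [ht_some, Ch]
    have E1 := eqn _ _ h₁
    have E2 := eqn _ _ h₂
    have hx' := sub_ne_zero.2 hx
    have E3 : x₃ * (x₁ - x₂) ^ 2 = (y₁ - y₂) ^ 2 - (x₁ + x₂) * (x₁ - x₂) ^ 2 := by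
      rw [ex3]; field_simp; ring
    have E4 : x₄ * (x₁ - x₂) ^ 2 = (y₁ + y₂) ^ 2 - (x₁ + x₂) * (x₁ - x₂) ^ 2 := by
      rw [ex4]; field_simp; ring
    have := glob_add (n := n) (x₁ := x₁) (x₂ := x₂) (x₃ := x₃) (x₄ := x₄)
      (by exact_mod_cast hn) hx
      (by
        linear_combination E3 + E4 + 2 * E1 + 2 * E2)
      (by
        have h0 : (x₁ - x₂) ^ 2 ≠ 0 := by positivity
        apply mul_left_cancel₀ h0
        have : (x₁ - x₂) ^ 2 * (x₃ * x₄ * (x₁ - x₂) ^ 2) =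
          (x₃ * (x₁ - x₂) ^ 2) * (x₄ * (x₁ - x₂) ^ 2) := by ring
        rw [this, E3, E4]
        have e5 : ∀ S : ℚ, ((y₁ - y₂) ^ 2 - S) * ((y₁ + y₂) ^ 2 - S) =
          (y₁ ^ 2 - y₂ ^ 2) ^ 2 - 2 * S * (y₁ ^ 2 + y₂ ^ 2) + S ^ 2 := by intro S; ring
        rw [e5, E1, E2]
        ring)
    linarith

lemma ht_par (hn : n ≠ 0) (P Q : Pt n) :
    |ht (P + Q) + ht (P - Q) - 2 * (ht P + ht Q)| ≤ 2 * Ch := by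
  have h1 := ht_upper hn P Q
  have h2 := ht_upper hn (P + Q) (P - Q)
  rw [show P + Q + (P - Q) = P + P by abel, show P + Q - (P - Q) = Q + Q by abel] at h2
  have h3 := ht_dbl_ge hn P
  have h4 := ht_dbl_ge hn Q
  have := Ch_nonneg
  rw [abs_le]
  constructor <;> linarith

lemma northcott_ht (hn : n ≠ 0) : Northcott (ht : Pt n → ℝ) := by
  have hn' : (n : ℚ) ≠ 0 := by exact_mod_cast hn
  refine ⟨fun B => ?_⟩
  have f1 : {u : ℚ | logHeight₁ u ≤ B}.Finite := Northcott.finite_le B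
  have f2 : {x : ℚ | hh n x ≤ B}.Finite := by
    refine Set.Finite.of_injOn (f := fun x : ℚ => x ^ 3 / (n : ℚ)) (t := {u : ℚ | logHeight₁ u ≤ B})
      (fun x hx => hx) ?_ f1
    intro x _ y _ hxy
    have : x ^ 3 = y ^ 3 := by simpa [hn'] using hxy
    exact (Odd.strictMono_pow (by decide : Odd 3)).injective this
  have f3 : {p : ℚ × ℚ | hh n p.1 ≤ B ∧ p.2 ^ 2 = p.1 ^ 3 + n}.Finite := by
    refine (f2.biUnion (t := fun x => ({x} : Set ℚ) ×ˢ {y : ℚ | y ^ 2 = x ^ 3 + n}) ?_).subset ?_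
    · intro x _
      refine (Set.finite_singleton x).prod ?_
      by_cases he : ∃ y₀ : ℚ, y₀ ^ 2 = x ^ 3 + n
      · obtain ⟨y₀, h0⟩ := he
        refine (Set.toFinite {y₀, -y₀}).subset ?_
        intro y hy
        exact sq_eq_sq_iff_eq_or_eq_neg.1 (Eq.trans hy h0.symm)
      · convert Set.finite_empty
        ext y
        simp only [Set.mem_ofPred_eq, Set.mem_empty_iff_false, iff_false]
        exact fun h => he ⟨y, h⟩
    · rintro ⟨x, y⟩ ⟨h1, h2⟩
      simp only [Set.mem_iUnion]
      exact ⟨x, h1, rfl, h2⟩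
  have f4 : {P : Pt n | ht P ≤ B} ⊆ {0} ∪ {P : Pt n | ∃ x y h, P = Affine.Point.some x y h ∧ hh n x ≤ B} := by
    rintro (_ | ⟨x, y, h⟩) hP
    · exact Or.inl rfl
    · exact Or.inr ⟨x, y, h, rfl, hP⟩
  refine Set.Finite.subset ((Set.finite_singleton _).union ?_) f4
  let g : Pt n → ℚ × ℚ := fun P => match P with
    | .zero => (0, 0)
    | .some x y _ => (x, y)
  refine Set.Finite.of_injOn (f := g) (t := {p : ℚ × ℚ | hh n p.1 ≤ B ∧ p.2 ^ 2 = p.1 ^ 3 + n}) ?_ ?_ f3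
  · rintro P ⟨x, y, h, rfl, hx⟩
    exact ⟨hx, eqn _ _ h⟩
  · rintro P ⟨x, y, h, rfl, hx⟩ Q ⟨x', y', h', rfl, hx'⟩ hg
    simp only [g, Prod.mk.injEq] at hg
    obtain ⟨rfl, rfl⟩ := hg
    rfl

end
end Moh

namespace Moh
open Height Real WeierstrassCurve
variable {n : ℤ}

/-- three points whose `x`- or `y`-coordinates satisfy an affine relation with small integral
coefficients -/
def Rel (P₀ P₁ P₂ : Pt n) (N : ℕ) : Prop :=
  ∃ (x₀ y₀ x₁ y₁ x₂ y₂ : ℚ) (h₀ : _) (h₁ : _) (h₂ : _),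
    P₀ = Affine.Point.some x₀ y₀ h₀ ∧ P₁ = Affine.Point.some x₁ y₁ h₁ ∧
    P₂ = Affine.Point.some x₂ y₂ h₂ ∧ ∃ l₀ l₁ l₂ : ℤ, l₀ ≠ 0 ∧
    l₀.natAbs ≤ N ∧ l₁.natAbs ≤ N ∧ l₂.natAbs ≤ N ∧
    ((l₀ * x₀ = l₁ * x₁ + l₂ * x₂) ∨ (l₀ * y₀ = l₁ * y₁ + l₂ * y₂))

/-- constant -/
noncomputable def Cg (N : ℕ) : ℝ := (3 * (N + 20) : ℕ) * log 2

lemma Cg_ge (N : ℕ) : ((3 * (N + 11) : ℕ) : ℝ) * log 2 ≤ Cg N := by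
  have hl := log_nonneg (one_le_two (α := ℝ))
  unfold Cg
  gcongr
  norm_num

lemma ht_gap (hn : n ≠ 0) {P₀ P₁ P₂ : Pt n} {N : ℕ} (h : Rel P₀ P₁ P₂ N) (h1 : P₁ ≠ P₀)
    (h2 : P₂ ≠ P₀) : ht P₀ ≤ ht (P₁ - P₀) + ht (P₂ - P₀) + Cg N := by
  have hn' : (n : ℚ) ≠ 0 := by exact_mod_cast hn
  obtain ⟨x₀, y₀, x₁, y₁, x₂, y₂, h₀, h₁, h₂, e₀, e₁, e₂, l₀, l₁, l₂, l0, b₀, b₁, b₂, hl⟩ := h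
  have q1 : P₁ - P₀ ≠ 0 := sub_ne_zero.2 h1
  have q2 : P₂ - P₀ ≠ 0 := sub_ne_zero.2 h2
  have s1 : P₀ + (P₁ - P₀) = P₁ := by abel
  have s2 : P₀ + (P₂ - P₀) = P₂ := by abel
  generalize P₁ - P₀ = Q₁ at *
  generalize P₂ - P₀ = Q₂ at *
  rcases Q₁ with _ | ⟨a, b, ha⟩
  · exact absurd rfl q1
  rcases Q₂ with _ | ⟨a', b', ha'⟩
  · exact absurd rfl q2
  subst e₀ e₁ e₂
  have r1 := add_rel s1
  have r2 := add_rel s2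
  simp only [ht_some]
  rcases hl with hl | hl
  · have := glob_gap_x hn' (eqn _ _ h₀) (eqn _ _ ha) (eqn _ _ ha') r1 r2 N l₀ l₁ l₂ l0 b₀ b₁ b₂ hl
    have := Cg_ge N
    linarith
  · exact glob_gap_y hn' (eqn _ _ h₀) (eqn _ _ ha) (eqn _ _ ha') (eqn _ _ h₁) (eqn _ _ h₂)
      r1 r2 N l₀ l₁ l₂ l0 b₀ b₁ b₂ hl

lemma ht_int (hn : n ≠ 0) {P₀ P₁ P₂ : Pt n} {N : ℕ} (h : Rel P₀ P₁ P₂ N) :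
    ht P₀ ≤ ht P₁ + ht P₂ + Cg N := by
  have hn' : (n : ℚ) ≠ 0 := by exact_mod_cast hn
  obtain ⟨x₀, y₀, x₁, y₁, x₂, y₂, h₀, h₁, h₂, e₀, e₁, e₂, l₀, l₁, l₂, l0, b₀, b₁, b₂, hl⟩ := h
  subst e₀ e₁ e₂
  simp only [ht_some]
  rcases hl with hl | hl
  · have := glob_int_x hn' N l₀ l₁ l₂ l0 b₀ b₁ b₂ hl
    have := Cg_ge N
    linarith
  · exact glob_int_y hn' (eqn _ _ h₀) (eqn _ _ h₁) (eqn _ _ h₂) N l₀ l₁ l₂ l0 b₀ b₁ b₂ hl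

end Moh

namespace Moh
open Real Filter Topology

/-- canonical height -/
theorem exists_canonical {G : Type*} [AddCommGroup G] (h : G → ℝ) (C : ℝ)
    (H : ∀ x y, |h (x + y) + h (x - y) - 2 * (h x + h y)| ≤ C) (h0 : h 0 = 0) (hpos : ∀ x, 0 ≤ h x) :
    ∃ q : G → ℝ, (∀ x y, q (x + y) + q (x - y) = 2 * (q x + q y)) ∧ (∀ x, 0 ≤ q x) ∧
      ∀ x, |q x - h x| ≤ C := by
  have C0 : 0 ≤ C := (abs_nonneg _).trans (H 0 0)
  let f : G → ℕ → ℝ := fun x k => h ((2 ^ k : ℕ) • x) / 4 ^ k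
  have hd : ∀ x, |h (x + x) - 4 * h x| ≤ C := by
    intro x
    have := H x x
    rw [sub_self, h0] at this
    convert this using 2
    ring
  have step : ∀ x k, dist (f x k) (f x (k + 1)) ≤ C / 2 / 2 ^ k := by
    intro x k
    have h1 := hd ((2 ^ k : ℕ) • x)
    have e : (2 ^ (k + 1) : ℕ) • x = (2 ^ k : ℕ) • x + (2 ^ k : ℕ) • x := by
      rw [← add_smul]; congr 1; ring
    rw [dist_comm, Real.dist_eq]
    simp only [f]
    rw [e]
    have : h ((2 ^ k : ℕ) • x + (2 ^ k : ℕ) • x) / 4 ^ (k + 1) - h ((2 ^ k : ℕ) • x) / 4 ^ k =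
      (h ((2 ^ k : ℕ) • x + (2 ^ k : ℕ) • x) - 4 * h ((2 ^ k : ℕ) • x)) / 4 ^ (k + 1) := by
      field_simp
      ring
    rw [this, abs_div, abs_of_pos (by positivity : (0:ℝ) < 4 ^ (k + 1)), div_div]
    have : (2 : ℝ) * 2 ^ k ≤ 4 ^ (k + 1) := by
      rw [← pow_succ']
      gcongr; norm_num
    gcongr
  have hc : ∀ x, ∃ l, Tendsto (f x) atTop (𝓝 l) := fun x =>
    cauchySeq_tendsto_of_complete (cauchySeq_of_le_geometric_two (step x))
  choose q hq using hc
  refine ⟨q, ?_, ?_, ?_⟩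
  · intro x y
    have t1 := (((hq (x + y)).add (hq (x - y))).sub (((hq x).add (hq y)).const_mul 2))
    have t2 : Tendsto (fun k : ℕ => C / 4 ^ k) atTop (𝓝 0) := by
      have := (tendsto_pow_atTop_nhds_zero_of_lt_one (r := (1 / 4 : ℝ)) (by norm_num) (by norm_num)).const_mul C
      simpa [div_eq_mul_inv] using this
    have t3 : Tendsto (fun k => f (x + y) k + f (x - y) k - 2 * (f x k + f y k)) atTop (𝓝 0) := by
      refine squeeze_zero_norm ?_ t2
      intro k
      have := H ((2 ^ k : ℕ) • x) ((2 ^ k : ℕ) • y)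
      rw [← smul_add, ← smul_sub] at this
      simp only [f]
      rw [← add_div, ← add_div, mul_div_assoc', ← sub_div, Real.norm_eq_abs, abs_div,
        abs_of_pos (by positivity : (0:ℝ) < 4 ^ k)]
      gcongr
    have := tendsto_nhds_unique t1 t3
    linarith
  · intro x
    refine ge_of_tendsto' (hq x) fun k => ?_
    have := hpos ((2 ^ k : ℕ) • x)
    simp only [f]
    positivity
  · intro x
    have := dist_le_of_le_geometric_two_of_tendsto₀ (step x) (hq x)
    simp only [f, pow_zero, one_smul, div_one] at this
    rw [dist_comm, Real.dist_eq] at this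
    exact this

end Moh

namespace Moh
open Real Filter Topology
open scoped TensorProduct

section psd
open scoped MatrixOrder Matrix.Norms.L2Operator

lemma psd_factor {r : ℕ} (A : Matrix (Fin r) (Fin r) ℝ) (hA : A.PosSemidef) :
    ∃ C : Matrix (Fin r) (Fin r) ℝ, A = C.transpose * C := by
  obtain ⟨C, hC⟩ := CStarAlgebra.nonneg_iff_eq_star_mul_self.1 hA.nonneg
  exact ⟨C, by rw [hC, Matrix.star_eq_conjTranspose, Matrix.conjTranspose_eq_transpose_of_trivial]⟩
end psd

variable {G : Type*} [AddCommGroup G]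

lemma pure_tensor (v : ℚ ⊗[ℤ] G) : ∃ (m : ℕ) (g : G), m ≠ 0 ∧ (m : ℚ) • v = (1 : ℚ) ⊗ₜ[ℤ] g := by
  induction v with
  | zero => exact ⟨1, 0, one_ne_zero, by simp⟩
  | tmul x g =>
    refine ⟨x.den, x.num • g, x.den_nz, ?_⟩
    rw [TensorProduct.smul_tmul', ← TensorProduct.smul_tmul, smul_eq_mul, mul_comm, Rat.mul_den_eq_num]
    simp
  | add v w hv hw =>
    obtain ⟨m, g, hm, e⟩ := hv
    obtain ⟨m', g', hm', e'⟩ := hw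
    refine ⟨m * m', m' • g + m • g', mul_ne_zero hm hm', ?_⟩
    rw [TensorProduct.tmul_add, TensorProduct.tmul_smul, TensorProduct.tmul_smul, ← e, ← e', smul_add]
    push_cast
    rw [← Nat.cast_smul_eq_nsmul ℚ, ← Nat.cast_smul_eq_nsmul ℚ, smul_smul, smul_smul, mul_comm (m' : ℚ)]

/-- the bilinear form of an exact quadratic height -/
lemma exists_bilin (q : G → ℝ) (hq : ∀ x y, q (x + y) + q (x - y) = 2 * (q x + q y)) :
    ∃ B : G →ₗ[ℤ] G →ₗ[ℤ] ℝ, (∀ x, B x x = q x) ∧ ∀ x y, B x y = B y x := by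
  have q0 : q 0 = 0 := by have := hq 0 0; simp at this; linarith
  have qn : ∀ x, q (-x) = q x := by
    intro x
    have := hq 0 x
    simp [q0] at this
    linarith
  let b : G → G → ℝ := fun x y => (q (x + y) - q (x - y)) / 4
  have bs : ∀ x y, b x y = b y x := by
    intro x y
    simp only [b]
    rw [add_comm x y, ← neg_sub y x, qn]
  have ba : ∀ x y z, b (x + y) z = b x z + b y z := by
    intro x y z
    simp only [b]
    have h1 := hq (x + z) y
    have h2 := hq (x - z) y
    have h3 := hq x (y + z)
    have h4 := hq x (y - z)
    have h5 := hq (x + y) z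
    have h6 := hq y z
    have h7 := hq x z
    have h8 := hq x y
    have e1 : x + z + y = x + y + z := by abel
    have e2 : x - z + y = x + y - z := by abel
    have e3 : x + (y + z) = x + y + z := by abel
    have e4 : x + (y - z) = x + y - z := by abel
    have e5 : x - (y + z) = x - z - y := by abel
    have e6 : x - (y - z) = x + z - y := by abel
    rw [e1] at h1
    rw [e2] at h2
    rw [e3, e5] at h3
    rw [e4, e6] at h4
    linarith
  let f : G →+ G →+ ℝ := AddMonoidHom.mk' (fun x => AddMonoidHom.mk' (fun y => b x y)
    (fun y z => by rw [bs, ba, bs y, bs z])) (fun x y => by ext z; exact ba x y z)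
  let F : G →+ G →ₗ[ℤ] ℝ := AddMonoidHom.mk' (fun x => (f x).toIntLinearMap)
    (fun x y => by ext z; simp)
  refine ⟨F.toIntLinearMap, ?_, ?_⟩
  · intro x
    change (q (x + x) - q (x - x)) / 4 = q x
    have := hq x x
    rw [sub_self, q0] at *
    linarith
  · intro x y
    exact bs x y

lemma exists_ext (B : G →ₗ[ℤ] G →ₗ[ℤ] ℝ) :
    ∃ B2 : (ℚ ⊗[ℤ] G) →ₗ[ℚ] (ℚ ⊗[ℤ] G) →ₗ[ℚ] ℝ, ∀ g g', B2 (1 ⊗ₜ g) (1 ⊗ₜ g') = B g g' := by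
  let B1 : G →ₗ[ℤ] ((ℚ ⊗[ℤ] G) →ₗ[ℚ] ℝ) :=
    ((LinearMap.liftBaseChangeEquiv (R := ℤ) (M := G) (N := ℝ) ℚ).toLinearMap.restrictScalars ℤ) ∘ₗ B
  have h1 : ∀ g g', B1 g (1 ⊗ₜ g') = B g g' := by
    intro g g'
    change (LinearMap.liftBaseChange ℚ (B g)) (1 ⊗ₜ g') = _
    rw [LinearMap.liftBaseChange_tmul, one_smul]
  refine ⟨LinearMap.liftBaseChange ℚ B1, fun g g' => ?_⟩
  rw [LinearMap.liftBaseChange_tmul, one_smul, h1]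

theorem exists_coords [FiniteDimensional ℚ (ℚ ⊗[ℤ] G)] (q : G → ℝ)
    (hq : ∀ x y, q (x + y) + q (x - y) = 2 * (q x + q y)) (hp : ∀ x, 0 ≤ q x) :
    ∃ t : G → Fin (Module.finrank ℚ (ℚ ⊗[ℤ] G)) → ℝ, (∀ x y, t (x - y) = t x - t y) ∧
      ∀ x, q x = ∑ i, t x i ^ 2 := by
  obtain ⟨B, hB, hs⟩ := exists_bilin q hq
  obtain ⟨B2, hB2⟩ := exists_ext B
  have sym : ∀ v w, B2 v w = B2 w v := by
    intro v w
    obtain ⟨m, g, hm, e⟩ := pure_tensor v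
    obtain ⟨m', g', hm', e'⟩ := pure_tensor w
    have h1 : B2 ((m : ℚ) • v) ((m' : ℚ) • w) = B2 ((m' : ℚ) • w) ((m : ℚ) • v) := by
      rw [e, e', hB2, hB2, hs]
    simp only [map_smul, LinearMap.smul_apply, smul_smul] at h1
    rw [mul_comm (m' : ℚ)] at h1
    exact (smul_right_injective ℝ (by positivity : (m : ℚ) * m' ≠ 0)) h1
  have pos : ∀ v, 0 ≤ B2 v v := by
    intro v
    obtain ⟨m, g, hm, e⟩ := pure_tensor v
    have h1 : B2 ((m : ℚ) • v) ((m : ℚ) • v) = q g := by rw [e, hB2, hB]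
    simp only [map_smul, LinearMap.smul_apply, Rat.smul_def] at h1
    rw [← mul_assoc] at h1
    have h2 := hp g
    rw [← h1] at h2
    have h3 : (0 : ℝ) < ((m : ℚ) : ℝ) * ((m : ℚ) : ℝ) := by
      have : (0 : ℚ) < m := by positivity
      exact_mod_cast mul_pos this this
    exact nonneg_of_mul_nonneg_right h2 h3
  let b := Module.finBasis ℚ (ℚ ⊗[ℤ] G)
  let A : Matrix (Fin (Module.finrank ℚ (ℚ ⊗[ℤ] G))) (Fin (Module.finrank ℚ (ℚ ⊗[ℤ] G))) ℝ :=
    Matrix.of fun i j => B2 (b i) (b j)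
  have hA : ∀ i j, A i j = B2 (b i) (b j) := fun i j => rfl
  clear_value A
  have expand : ∀ c d : Fin (Module.finrank ℚ (ℚ ⊗[ℤ] G)) → ℚ,
      B2 (∑ i, c i • b i) (∑ i, d i • b i) = ∑ i, ∑ j, (c i : ℝ) * A i j * (d j : ℝ) := by
    intro c d
    rw [map_sum B2, LinearMap.sum_apply]
    refine Finset.sum_congr rfl fun i _ => ?_
    rw [map_sum]
    refine Finset.sum_congr rfl fun j _ => ?_
    simp only [map_smul, LinearMap.smul_apply, Rat.smul_def, hA]
    ring
  have psd : A.PosSemidef := by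
    refine Matrix.PosSemidef.of_dotProduct_mulVec_nonneg ?_ ?_
    · ext i j
      rw [Matrix.conjTranspose_apply, star_trivial, hA, hA, sym]
    · have dn : DenseRange (Pi.map (fun (_ : Fin (Module.finrank ℚ (ℚ ⊗[ℤ] G))) (x : ℚ) => (x : ℝ))) :=
        DenseRange.piMap fun i => Rat.denseRange_cast
      intro x
      have cont : Continuous fun x : Fin (Module.finrank ℚ (ℚ ⊗[ℤ] G)) → ℝ => ∑ i, ∑ j, x i * A i j * x j := by
        fun_prop
      have : 0 ≤ ∑ i, ∑ j, x i * A i j * x j := by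
        refine dn.induction_on (p := fun x => 0 ≤ ∑ i, ∑ j, x i * A i j * x j) x
          (isClosed_le continuous_const cont) ?_
        intro c
        have := pos (∑ i, c i • b i)
        rw [expand] at this
        exact this
      have e : dotProduct (star x) (A.mulVec x) = ∑ i, ∑ j, x i * A i j * x j := by
        simp only [dotProduct, Matrix.mulVec, star_trivial, Finset.mul_sum, mul_assoc]
      rw [e]
      exact this
  obtain ⟨C, hC⟩ := psd_factor A psd
  refine ⟨fun g k => ∑ i, C k i * ((b.repr (1 ⊗ₜ g) i : ℚ) : ℝ), ?_, ?_⟩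
  · intro x y
    ext k
    simp only [TensorProduct.tmul_sub, map_sub, Finsupp.sub_apply, Rat.cast_sub, mul_sub,
      Finset.sum_sub_distrib, Pi.sub_apply]
  · intro g
    rw [← hB g, ← hB2]
    conv_lhs => rw [← b.sum_repr (1 ⊗ₜ g)]
    rw [expand, hC]
    simp only [Matrix.mul_apply, Matrix.transpose_apply, Finset.mul_sum, Finset.sum_mul, pow_two]
    have : ∀ (f : Fin (Module.finrank ℚ (ℚ ⊗[ℤ] G)) → Fin (Module.finrank ℚ (ℚ ⊗[ℤ] G)) → Fin (Module.finrank ℚ (ℚ ⊗[ℤ] G)) → ℝ),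
      ∑ i, ∑ j, ∑ k, f i j k = ∑ k, ∑ j, ∑ i, f i j k := by
      intro f
      rw [Finset.sum_congr rfl fun i _ => Finset.sum_comm]
      rw [Finset.sum_comm]
      exact Finset.sum_congr rfl fun i _ => Finset.sum_comm
    rw [this]
    refine Finset.sum_congr rfl fun k _ => Finset.sum_congr rfl fun j _ =>
      Finset.sum_congr rfl fun i _ => by ring

end Moh

namespace Moh
open scoped TensorProduct

def Nbox (R : ℕ) : ℕ := 2 * (8 * (R + 1) + 1) ^ R + 1

theorem packing (R : ℕ) {G : Type*} [AddCommGroup G] [FiniteDimensional ℚ (ℚ ⊗[ℤ] G)]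
    (hr : Module.finrank ℚ (ℚ ⊗[ℤ] G) ≤ R) (q : G → ℝ)
    (hq : ∀ x y, q (x + y) + q (x - y) = 2 * (q x + q y)) (hp : ∀ x, 0 ≤ q x)
    (P : Fin (Nbox R) → G) (H : ℝ) (hH : ∀ i, q (P i) ≤ H) :
    ∃ i j k, i ≠ j ∧ i ≠ k ∧ j ≠ k ∧ q (P i - P j) ≤ H / 16 ∧ q (P i - P k) ≤ H / 16 ∧ q (P j - P k) ≤ H / 16 := by
  have hH0 : 0 ≤ H := (hp _).trans (hH ⟨0, by unfold Nbox; omega⟩)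
  generalize hrd : Module.finrank ℚ (ℚ ⊗[ℤ] G) = r at hr
  have hco := exists_coords q hq hp
  rw [hrd] at hco
  obtain ⟨t, ht, hqt⟩ := hco
  let s : ℕ := 4 * (R + 1)
  have hs : (0 : ℝ) < s := by simp only [s]; positivity
  have htb : ∀ i k, |t (P i) k| ≤ Real.sqrt H := by
    intro i k
    rw [← Real.sqrt_sq_eq_abs]
    apply Real.sqrt_le_sqrt
    refine le_trans ?_ (hH i)
    rw [hqt]
    exact Finset.single_le_sum (f := fun k => t (P i) k ^ 2) (fun k _ => sq_nonneg _) (Finset.mem_univ k)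
  have hz : ∀ i k, |t (P i) k * s / Real.sqrt H| ≤ s := by
    intro i k
    rw [abs_div, abs_mul, abs_of_pos hs, abs_of_nonneg (Real.sqrt_nonneg H)]
    apply div_le_of_le_mul₀ (Real.sqrt_nonneg H) hs.le
    rw [mul_comm]
    exact mul_le_mul_of_nonneg_left (htb i k) hs.le
  let f : Fin (Nbox R) → (Fin r → Finset.Icc (-(s : ℤ)) s) := fun i k =>
    ⟨⌊t (P i) k * s / Real.sqrt H⌋, by
      have := abs_le.1 (hz i k)
      rw [Finset.mem_Icc, Int.le_floor]
      constructor
      · push_cast; exact this.1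
      · have := (Int.floor_le (t (P i) k * s / Real.sqrt H)).trans this.2
        exact_mod_cast this⟩
  have hc : Fintype.card (Fin r → Finset.Icc (-(s : ℤ)) s) * 2 < Fintype.card (Fin (Nbox R)) := by
    rw [Fintype.card_fun, Fintype.card_coe, Int.card_Icc, Fintype.card_fin, Fintype.card_fin]
    have e : ((s : ℤ) + 1 - -(s : ℤ)).toNat = 8 * (R + 1) + 1 := by simp only [s]; omega
    rw [e]
    unfold Nbox
    have := Nat.pow_le_pow_right (n := 8 * (R + 1) + 1) (by omega) hr
    omega
  obtain ⟨y, hy⟩ := Fintype.exists_lt_card_fiber_of_mul_lt_card f hc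
  obtain ⟨i, j, k, hi, hj, hk, hij, hik, hjk⟩ := Finset.two_lt_card_iff.1 hy
  simp only [Finset.mem_filter, Finset.mem_univ, true_and] at hi hj hk
  have key : ∀ i k, f i = f k → q (P i - P k) ≤ H / 16 := by
    intro i k e
    rw [hqt, ht]
    have h1 : ∀ l, (t (P i) - t (P k)) l ^ 2 ≤ H / s ^ 2 := by
      intro l
      rw [Pi.sub_apply]
      have e1 : ⌊t (P i) l * s / Real.sqrt H⌋ = ⌊t (P k) l * s / Real.sqrt H⌋ :=
        congrArg Subtype.val (congrFun e l)
      have e2 := Int.abs_sub_lt_one_of_floor_eq_floor e1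
      rcases hH0.eq_or_lt with h0 | h0
      · have a := htb i l
        have b := htb k l
        rw [← h0, Real.sqrt_zero] at a b
        rw [abs_nonpos_iff.1 a, abs_nonpos_iff.1 b, ← h0]; simp
      · have hsq := Real.sqrt_pos.2 h0
        rw [← sub_div, ← sub_mul, abs_div, abs_mul, abs_of_pos hs, abs_of_pos hsq, div_lt_one hsq] at e2
        rw [le_div_iff₀ (by positivity), ← mul_pow, ← Real.sq_sqrt hH0, sq_le_sq, abs_mul, abs_of_pos hs,
          abs_of_pos hsq]
        exact e2.le
    refine (Finset.sum_le_sum fun l _ => h1 l).trans ?_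
    rw [Finset.sum_const, Finset.card_univ, Fintype.card_fin, nsmul_eq_mul]
    have hrR : (r : ℝ) ≤ R := by exact_mod_cast hr
    have : (s : ℝ) = 4 * (R + 1) := by simp [s]
    rw [this, mul_div_assoc', div_le_div_iff₀ (by positivity) (by norm_num)]
    have hR0 : (0 : ℝ) ≤ R := Nat.cast_nonneg R
    have : (r : ℝ) * 16 ≤ (4 * (R + 1)) ^ 2 := by nlinarith
    nlinarith
  exact ⟨i, j, k, hij, hik, hjk, key i j (hi.trans hj.symm), key i k (hi.trans hk.symm), key j k (hj.trans hk.symm)⟩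

/-- bounded rank implies bounded height -/
theorem bounded_ht {n : ℤ} (hn : n ≠ 0) (R : ℕ) [FiniteDimensional ℚ (ℚ ⊗[ℤ] (Pt n))]
    (hr : Module.finrank ℚ (ℚ ⊗[ℤ] (Pt n)) ≤ R) (P : Fin (Nbox R) → Pt n)
    (inj : Function.Injective P)
    (hrel : ∀ i j k, i ≠ j → i ≠ k → j ≠ k → Rel (P i) (P j) (P k) (Nbox R)) (l : Fin (Nbox R)) :
    ht (P l) ≤ 16 * Ch + 4 * Cg (Nbox R) := by
  obtain ⟨q, hq, hp, hqh⟩ := exists_canonical (ht : Pt n → ℝ) (2 * Ch) (ht_par hn) ht_zero ht_nonneg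
  have hqh1 : ∀ x, q x ≤ ht x + 2 * Ch := fun x => by have := (abs_le.1 (hqh x)).2; linarith
  have hqh2 : ∀ x, ht x ≤ q x + 2 * Ch := fun x => by have := (abs_le.1 (hqh x)).1; linarith
  have c0 : 0 ≤ Ch := Ch_nonneg
  have g0 : 0 ≤ Cg (Nbox R) := by
    unfold Cg
    have hl := Real.log_nonneg (one_le_two (α := ℝ))
    positivity
  haveI : Nonempty (Fin (Nbox R)) := ⟨l⟩
  obtain ⟨m, hm⟩ := Finite.exists_max fun i => q (P i)
  obtain ⟨i, j, k, hij, hik, hjk, a1, a2, a3⟩ := packing R hr q hq hp P (q (P m)) hm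
  have hns : ∀ x y : Pt n, ht (x - y) = ht (y - x) := fun x y => by rw [← ht_neg, neg_sub]
  have k1 := ht_gap hn (hrel k i j hik.symm hjk.symm hij) (fun h => hik (inj h)) (fun h => hjk (inj h))
  have k2 := ht_gap hn (hrel i j k hij hik hjk) (fun h => hij (inj h).symm) (fun h => hik (inj h).symm)
  rw [hns (P j), hns (P k)] at k2
  have b1 := hqh2 (P i - P j)
  have b2 := hqh2 (P i - P k)
  have b3 := hqh2 (P j - P k)
  have q0 := hp (P m)
  have key : ∀ l, ht (P l) ≤ q (P m) / 4 + 8 * Ch + 3 * Cg (Nbox R) := by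
    intro l
    by_cases h1 : l = i
    · subst h1; linarith
    by_cases h2 : l = k
    · subst h2; linarith
    have := ht_int hn (hrel l i k h1 h2 hik)
    linarith
  have := key m
  have := hqh1 (P m)
  have := key l
  linarith
end Moh

namespace Moh

lemma rat_pow_int {r : ℚ} {m : ℕ} (hm : 0 < m) {z : ℤ} (h : (z : ℚ) = r ^ m) : ∃ w : ℤ, (z : ℤ) = w ^ m := by
  have : IsIntegral ℤ (r ^ m) := by rw [← h]; exact isIntegral_algebraMap
  obtain ⟨w, hw⟩ := IsIntegrallyClosed.exists_algebraMap_eq_of_isIntegral_pow hm this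
  refine ⟨w, ?_⟩
  rw [← hw] at h
  simp only [algebraMap_int_eq, eq_intCast] at h
  exact_mod_cast h

lemma int_sq (C d p D : ℤ) (hC : 0 < C) (hd : 0 < d) (hD : D ≠ 0) :
    ∃ k : ℕ, 0 < k ∧ ∀ w : ℤ, C * (p + d * k) ^ 3 + D ≠ w ^ 2 := by
  obtain ⟨γ, hγ⟩ : ∃ γ, γ = C * d ^ 3 := ⟨_, rfl⟩
  obtain ⟨g, hg⟩ : ∃ g, g = 3 * C * d ^ 2 * p := ⟨_, rfl⟩
  obtain ⟨F, hF⟩ : ∃ F, F = 3 * C ^ 2 * d ^ 4 * p ^ 2 := ⟨_, rfl⟩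
  obtain ⟨g0, hg0⟩ : ∃ g0, g0 = C * p ^ 3 + D := ⟨_, rfl⟩
  have hγ0 : 0 < γ := by rw [hγ]; positivity
  have hF0 : 0 ≤ F := by rw [hF]; positivity
  obtain ⟨m, hm⟩ : ∃ m, m = F + |g| + 4 * |g0| + 1 := ⟨_, rfl⟩
  have a1 := abs_nonneg g
  have a2 := abs_nonneg g0
  have hm1 : 1 ≤ m := by omega
  have hk0 : 0 < γ * m ^ 2 := by positivity
  refine ⟨(γ * m ^ 2).toNat, by omega, ?_⟩
  rw [Int.toNat_of_nonneg hk0.le]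
  intro w hw
  obtain ⟨X, hX⟩ : ∃ X, X = 2 * γ ^ 2 * m ^ 3 + g * m := ⟨_, rfl⟩
  have e : (2 * w) ^ 2 = X ^ 2 + (F * m ^ 2 + 4 * g0) := by
    rw [mul_pow, ← hw, hX, hγ, hg, hF, hg0]; ring
  have m2 : 0 < m ^ 2 := by positivity
  have hmm : m ≤ m ^ 2 := by nlinarith
  have h3 : m ^ 3 = m * m ^ 2 := by ring
  have b1 : F * m ^ 2 + |g| * m ^ 2 + (4 * |g0| + 1) * m ^ 2 = m ^ 3 := by rw [h3]; nth_rw 4 [hm]; ring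
  have b2 : |g| * m ≤ |g| * m ^ 2 := by nlinarith
  have b3 : 4 * |g0| + 1 ≤ (4 * |g0| + 1) * m ^ 2 := by nlinarith
  have b4 : -(|g| * m) ≤ g * m := by nlinarith [neg_abs_le g]
  have m3 : 0 < m ^ 3 := by positivity
  have b5 : m ^ 3 ≤ γ ^ 2 * m ^ 3 := by nlinarith [sq_nonneg (γ - 1)]
  have Xl : m ^ 3 ≤ X := by nlinarith [mul_nonneg hF0 m2.le]
  have Xs : |F * m ^ 2 + 4 * g0| < X := by
    rw [abs_lt]
    have := neg_abs_le g0
    have := le_abs_self g0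
    have := mul_nonneg hF0 m2.le
    have := mul_nonneg a1 m2.le
    constructor <;> linarith
  have hz : F * m ^ 2 + 4 * g0 = 0 := by
    have hx0 : 0 < X := by linarith
    rw [abs_lt] at Xs
    have u1 : |2 * w| < X + 1 := by
      apply abs_lt_of_sq_lt_sq _ (by omega)
      nlinarith
    have u2 : X - 1 < |2 * w| := by
      rw [← abs_of_nonneg (by omega : (0:ℤ) ≤ X - 1)]
      apply sq_lt_sq.1
      nlinarith
    have u3 : |2 * w| = X := by omega
    have := sq_abs (2 * w)
    rw [u3] at this
    linarith
  have hFz : F = 0 := by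
    by_contra h
    have h1 : 1 ≤ F := by omega
    have h2 := neg_abs_le g0
    have h3 := mul_le_mul_of_nonneg_right h1 m2.le
    linarith
  have hg0z : g0 = 0 := by rw [hFz] at hz; omega
  have hp : p = 0 := by
    by_contra h
    have : 0 < F := by rw [hF]; positivity
    omega
  rw [hp] at hg0
  apply hD
  rw [hg0z] at hg0
  simpa using hg0.symm

lemma int_cube (C d p D : ℤ) (hC : 0 < C) (hd : 0 < d) (hD : D ≠ 0) :
    ∃ k : ℕ, 0 < k ∧ ∀ w : ℤ, C * (p + d * k) ^ 2 + D ≠ w ^ 3 := by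
  obtain ⟨γ, hγ⟩ : ∃ γ, γ = C * d ^ 2 := ⟨_, rfl⟩
  obtain ⟨F, hF⟩ : ∃ F, F = 2 * C ^ 2 * d ^ 3 * p := ⟨_, rfl⟩
  obtain ⟨g0, hg0⟩ : ∃ g0, g0 = C * p ^ 2 + D := ⟨_, rfl⟩
  have hγ0 : 0 < γ := by rw [hγ]; positivity
  obtain ⟨m, hm⟩ : ∃ m, m = |F| + |g0| + 1 := ⟨_, rfl⟩
  have a1 := abs_nonneg F
  have a2 := abs_nonneg g0
  have hm1 : 1 ≤ m := by omega
  have hk0 : 0 < γ * m ^ 3 := by positivity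
  refine ⟨(γ * m ^ 3).toNat, by omega, ?_⟩
  rw [Int.toNat_of_nonneg hk0.le]
  intro w hw
  obtain ⟨Z, hZ⟩ : ∃ Z, Z = γ * m ^ 2 := ⟨_, rfl⟩
  have e : w ^ 3 = Z ^ 3 + (F * m ^ 3 + g0) := by
    rw [← hw, hZ, hγ, hF, hg0]; ring
  have m2 : 0 < m ^ 2 := by positivity
  have m3 : 0 < m ^ 3 := by positivity
  have Zl : m ^ 2 ≤ Z := by rw [hZ]; nlinarith
  have Z1 : 1 ≤ Z := by linarith
  have Zs : m ^ 4 ≤ Z ^ 2 := by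
    have : m ^ 4 = (m ^ 2) ^ 2 := by ring
    rw [this]; exact pow_le_pow_left₀ m2.le Zl 2
  have b1 : |F| * m ^ 3 + |g0| * m ^ 3 + m ^ 3 = m ^ 4 := by
    have h3 : m ^ 4 = m * m ^ 3 := by ring
    rw [h3]; nth_rw 4 [hm]; ring
  have b3 : |g0| ≤ |g0| * m ^ 3 := by nlinarith
  have Xs : |F * m ^ 3 + g0| < Z ^ 2 := by
    refine (abs_add_le _ _).trans_lt ?_
    rw [abs_mul, abs_of_pos m3]
    linarith
  have hz : F * m ^ 3 + g0 = 0 := by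
    rw [abs_lt] at Xs
    have odd3 : Odd 3 := by decide
    have u1 : w < Z + 1 := by
      apply (Odd.strictMono_pow (R := ℤ) odd3).lt_iff_lt.1
      show w ^ 3 < (Z + 1) ^ 3
      nlinarith
    have u2 : Z - 1 < w := by
      apply (Odd.strictMono_pow (R := ℤ) odd3).lt_iff_lt.1
      show (Z - 1) ^ 3 < w ^ 3
      nlinarith
    have u3 : w = Z := by omega
    rw [u3] at e
    linarith
  have hFz : F = 0 := by
    by_contra h
    have h1 : 1 ≤ |F| := Int.one_le_abs h
    have h2 : |F * m ^ 3| = |g0| := by rw [eq_neg_of_add_eq_zero_left hz, abs_neg]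
    rw [abs_mul, abs_of_pos m3] at h2
    have : m ≤ m ^ 3 := by nlinarith
    nlinarith
  have hg0z : g0 = 0 := by rw [hFz] at hz; omega
  have hp : p = 0 := by
    by_contra h
    have : F ≠ 0 := by rw [hF]; positivity
    omega
  rw [hp] at hg0
  apply hD
  rw [hg0z] at hg0
  simpa using hg0.symm

lemma rat_sq (α β c : ℚ) (hc : c ≠ 0) (hβ : β ≠ 0) :
    ∃ k : ℕ, 0 < k ∧ ¬ IsSquare (c * ((α + k) ^ 3 + β)) := by
  rcases hc.lt_or_gt with hc | hc
  · obtain ⟨k, hk⟩ := exists_nat_gt (|α| + |β| + 1)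
    have h1 := neg_abs_le α
    have h2 := neg_abs_le β
    have h3 := abs_nonneg α
    have h4 := abs_nonneg β
    refine ⟨k, by have : (0 : ℚ) < k := by linarith
                  exact_mod_cast this, fun h => ?_⟩
    have h5 : |β| + 1 < α + k := by linarith
    have h6 : |β| + 1 < (α + k) ^ 3 := by nlinarith [sq_nonneg (α + k)]
    have := h.nonneg
    nlinarith
  · have cn : (c.num : ℚ) = c * c.den := (Rat.mul_den_eq_num c).symm
    have an : (α.num : ℚ) = α * α.den := (Rat.mul_den_eq_num α).symm
    have bn : (β.num : ℚ) = β * β.den := (Rat.mul_den_eq_num β).symm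
    have cd := c.den_pos
    have ad := α.den_pos
    have bd := β.den_pos
    have cp := Rat.num_pos.2 hc
    obtain ⟨k, hk, h⟩ := int_sq (c.num * c.den * α.den * β.den ^ 2) α.den α.num
      (c.num * c.den * α.den ^ 4 * β.den * β.num) (by positivity) (by positivity)
      (by have := Rat.num_ne_zero.2 hβ; positivity)
    refine ⟨k, hk, fun ⟨r, hr⟩ => ?_⟩
    obtain ⟨w, hw⟩ := rat_pow_int (r := r * c.den * α.den ^ 2 * β.den) (m := 2) (by norm_num)
      (z := (c.num * c.den * α.den * β.den ^ 2) * (α.num + α.den * k) ^ 3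
        + (c.num * c.den * α.den ^ 4 * β.den * β.num)) (by
        have : (r * c.den * α.den ^ 2 * β.den) ^ 2 = (r * r) * (c.den * α.den ^ 2 * β.den) ^ 2 := by ring
        rw [this, ← hr]
        push_cast
        rw [cn, an, bn]
        ring)
    exact h w hw

lemma rat_cube_aux (α β c : ℚ) (hc : 0 < c) (hβ : β ≠ 0) :
    ∃ k : ℕ, 0 < k ∧ ¬ ∃ r, c * ((α + k) ^ 2 - β) = r ^ 3 := by
  have cn : (c.num : ℚ) = c * c.den := (Rat.mul_den_eq_num c).symm
  have an : (α.num : ℚ) = α * α.den := (Rat.mul_den_eq_num α).symm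
  have bn : (β.num : ℚ) = β * β.den := (Rat.mul_den_eq_num β).symm
  have cd := c.den_pos
  have ad := α.den_pos
  have bd := β.den_pos
  have cp := Rat.num_pos.2 hc
  obtain ⟨k, hk, h⟩ := int_cube (c.num * c.den ^ 2 * α.den * β.den ^ 3) α.den α.num
    (- c.num * c.den ^ 2 * α.den ^ 3 * β.den ^ 2 * β.num) (by positivity) (by positivity)
    (by have := Rat.num_ne_zero.2 hβ
        have : c.num * c.den ^ 2 * α.den ^ 3 * β.den ^ 2 * β.num ≠ 0 := by positivity
        intro h; apply this; linarith)
  refine ⟨k, hk, fun ⟨r, hr⟩ => ?_⟩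
  obtain ⟨w, hw⟩ := rat_pow_int (r := r * c.den * α.den * β.den) (m := 3) (by norm_num)
    (z := (c.num * c.den ^ 2 * α.den * β.den ^ 3) * (α.num + α.den * k) ^ 2
      + (- c.num * c.den ^ 2 * α.den ^ 3 * β.den ^ 2 * β.num)) (by
      have : (r * c.den * α.den * β.den) ^ 3 = r ^ 3 * (c.den * α.den * β.den) ^ 3 := by ring
      rw [this, ← hr]
      push_cast
      rw [cn, an, bn]
      ring)
  exact h w hw

lemma rat_cube (α β c : ℚ) (hc : c ≠ 0) (hβ : β ≠ 0) :
    ∃ k : ℕ, 0 < k ∧ ¬ ∃ r, c * ((α + k) ^ 2 - β) = r ^ 3 := by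
  rcases hc.lt_or_gt with hc | hc
  · obtain ⟨k, hk, h⟩ := rat_cube_aux α β (-c) (by linarith) hβ
    exact ⟨k, hk, fun ⟨r, hr⟩ => h ⟨-r, by rw [neg_mul, hr]; ring⟩⟩
  · exact rat_cube_aux α β c hc hβ

end Moh

namespace Moh
open Height

lemma fin_ht (B : ℝ) : {u : ℚ | logHeight₁ u ≤ B}.Finite := Northcott.finite_le (h := fun u : ℚ => logHeight₁ u) B

lemma exists_bad_x (α β : ℚ) (hβ : β ≠ 0) : ∃ L : ℕ, ∀ c : ℚ, c ≠ 0 → ∀ N : ℕ,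
    (∀ k : ℕ, 1 ≤ k → k ≤ N → IsSquare (c * ((α + k) ^ 3 + β))) → N ≤ L := by
  obtain ⟨k₀, hk₀, h0⟩ : ∃ k₀ : ℕ, 1 ≤ k₀ ∧ (α + k₀) ^ 3 + β ≠ 0 := by
    by_contra! h
    have h1 := h 1 le_rfl
    have h2 := h 2 one_le_two
    have h3 : (α + (2 : ℕ)) ^ 3 = (α + (1 : ℕ)) ^ 3 := by linarith
    have := (Odd.strictMono_pow (R := ℚ) (n := 3) (by decide)).injective h3
    norm_num at this
  obtain ⟨k, hk, hs⟩ := rat_sq α β _ h0 hβ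
  refine ⟨k₀ + k, fun c hc N H => ?_⟩
  by_contra! hN
  apply hs
  obtain ⟨r, hr⟩ := H k₀ hk₀ (by omega)
  obtain ⟨s, hs⟩ := H k hk (by omega)
  refine ⟨r * s / c, ?_⟩
  field_simp
  linear_combination (c * ((α + k) ^ 3 + β)) * hr + (r * r) * hs

lemma exists_bad_y (α β : ℚ) (hβ : β ≠ 0) : ∃ L : ℕ, ∀ c : ℚ, c ≠ 0 → ∀ N : ℕ,
    (∀ k : ℕ, 1 ≤ k → k ≤ N → ∃ r, c * ((α + k) ^ 2 - β) = r ^ 3) → N ≤ L := by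
  obtain ⟨k₀, hk₀, h0⟩ : ∃ k₀ : ℕ, 1 ≤ k₀ ∧ (α + k₀) ^ 2 - β ≠ 0 := by
    by_contra! h
    have h1 := h 1 le_rfl
    have h2 := h 2 one_le_two
    have h3 := h 3 (by norm_num)
    push_cast at *
    linarith
  obtain ⟨k, hk, hs⟩ := rat_cube α β _ (pow_ne_zero 2 h0) hβ
  refine ⟨k₀ + k, fun c hc N H => ?_⟩
  by_contra! hN
  apply hs
  obtain ⟨r, hr⟩ := H k₀ hk₀ (by omega)
  obtain ⟨s, hs⟩ := H k hk (by omega)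
  refine ⟨r ^ 2 * s / c, ?_⟩
  have : (r ^ 2 * s / c) ^ 3 = (r ^ 3) ^ 2 * s ^ 3 / c ^ 3 := by ring
  rw [this, ← hr, ← hs]
  field_simp

theorem len_x (B : ℝ) : ∃ L : ℕ, ∀ n : ℚ, n ≠ 0 → ∀ a b : ℚ, b ≠ 0 →
    (∀ k : ℕ, 1 ≤ k → k ≤ 4 → hh n (a + k * b) ≤ B) → ∀ N : ℕ,
    (∀ k : ℕ, 1 ≤ k → k ≤ N → IsSquare ((a + k * b) ^ 3 + n)) → N ≤ L := by
  classical
  let T := (fin_ht B).toFinset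
  let β : ℚ × ℚ × ℚ × ℚ → ℚ := fun u => 6 / (u.2.2.2 - 3 * u.2.2.1 + 3 * u.2.1 - u.1)
  let α : ℚ × ℚ × ℚ × ℚ → ℚ := fun u => (u.2.2.1 - 2 * u.2.1 + u.1) * β u / 6 - 2
  let M : ℚ × ℚ × ℚ × ℚ → ℕ := fun u => if h : β u ≠ 0 then (exists_bad_x (α u) (β u) h).choose else 0
  refine ⟨(T ×ˢ T ×ˢ T ×ˢ T).sup M, fun n hn a b hb hB N H => ?_⟩
  let u : ℕ → ℚ := fun k => (a + k * b) ^ 3 / n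
  have hu : ∀ k : ℕ, 1 ≤ k → k ≤ 4 → u k ∈ T := by
    intro k h1 h2
    rw [Set.Finite.mem_toFinset]
    exact hB k h1 h2
  have hmem : (u 1, u 2, u 3, u 4) ∈ T ×ˢ T ×ˢ T ×ˢ T := by
    simp only [Finset.mem_product]
    exact ⟨hu 1 (by norm_num) (by norm_num), hu 2 (by norm_num) (by norm_num),
      hu 3 (by norm_num) (by norm_num), hu 4 (by norm_num) (by norm_num)⟩
  refine le_trans ?_ (Finset.le_sup (f := M) hmem)
  have eβ : β (u 1, u 2, u 3, u 4) = n / b ^ 3 := by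
    have : u 4 - 3 * u 3 + 3 * u 2 - u 1 = 6 * b ^ 3 / n := by
      simp only [u]; push_cast; field_simp; ring
    simp only [β]
    rw [this]; field_simp
  have eα : α (u 1, u 2, u 3, u 4) = a / b := by
    have : u 3 - 2 * u 2 + u 1 = 6 * b ^ 2 * (a + 2 * b) / n := by
      simp only [u]; push_cast; field_simp; ring
    simp only [α]
    rw [this, eβ]; field_simp; ring
  have h0 : β (u 1, u 2, u 3, u 4) ≠ 0 := by rw [eβ]; positivity
  simp only [M, dif_pos h0]
  refine (exists_bad_x _ _ h0).choose_spec (b ^ 3) (by positivity) N fun k h1 h2 => ?_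
  rw [eα, eβ]
  convert H k h1 h2 using 1
  field_simp

theorem len_y (B : ℝ) : ∃ L : ℕ, ∀ n : ℚ, n ≠ 0 → ∀ a b : ℚ, b ≠ 0 →
    ∀ N : ℕ, 3 ≤ N → 
    (∀ k : ℕ, 1 ≤ k → k ≤ N → ∃ x, (k ≤ 3 → hh n x ≤ B) ∧ (a + k * b) ^ 2 = x ^ 3 + n) → N ≤ L := by
  classical
  let T := (fin_ht B).toFinset
  let β : ℚ × ℚ × ℚ → ℚ := fun u => 2 / (u.2.2 - 2 * u.2.1 + u.1)
  let α : ℚ × ℚ × ℚ → ℚ := fun u => ((u.2.1 - u.1) * β u - 3) / 2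
  let M : ℚ × ℚ × ℚ → ℕ := fun u => if h : β u ≠ 0 then (exists_bad_y (α u) (β u) h).choose else 0
  refine ⟨(T ×ˢ T ×ˢ T).sup M, fun n hn a b hb N hN H => ?_⟩
  let u : ℕ → ℚ := fun k => (a + k * b) ^ 2 / n - 1
  have hu : ∀ k : ℕ, 1 ≤ k → k ≤ 3 → u k ∈ T := by
    intro k h1 h2
    rw [Set.Finite.mem_toFinset]
    obtain ⟨x, hx, e⟩ := H k h1 (by omega)
    have e2 : u k = x ^ 3 / n := by simp only [u]; rw [e]; field_simp; ring
    rw [e2]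
    exact hx h2
  have hmem : (u 1, u 2, u 3) ∈ T ×ˢ T ×ˢ T := by
    simp only [Finset.mem_product]
    exact ⟨hu 1 (by norm_num) (by norm_num), hu 2 (by norm_num) (by norm_num),
      hu 3 (by norm_num) (by norm_num)⟩
  refine le_trans ?_ (Finset.le_sup (f := M) hmem)
  have eβ : β (u 1, u 2, u 3) = n / b ^ 2 := by
    have : u 3 - 2 * u 2 + u 1 = 2 * b ^ 2 / n := by
      simp only [u]; push_cast; field_simp; ring
    simp only [β]
    rw [this]; field_simp
  have eα : α (u 1, u 2, u 3) = a / b := by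
    have : u 2 - u 1 = b * (2 * a + 3 * b) / n := by
      simp only [u]; push_cast; field_simp; ring
    simp only [α]
    rw [this, eβ]; field_simp; ring
  have h0 : β (u 1, u 2, u 3) ≠ 0 := by rw [eβ]; positivity
  simp only [M, dif_pos h0]
  refine (exists_bad_y _ _ h0).choose_spec (b ^ 2) (by positivity) N fun k h1 h2 => ?_
  rw [eα, eβ]
  obtain ⟨x, -, e⟩ := H k h1 h2
  refine ⟨x, ?_⟩
  rw [← sub_eq_iff_eq_add.2 e]
  field_simp
end Moh

namespace Moh
open scoped TensorProduct
open WeierstrassCurve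

lemma elliptic {n : ℤ} (hn : n ≠ 0) : (MordellCurve n).IsElliptic := by
  refine ⟨?_⟩
  have : (n : ℚ) ≠ 0 := by exact_mod_cast hn
  rw [isUnit_iff_ne_zero]
  simp [MordellCurve, WeierstrassCurve.Δ, WeierstrassCurve.b₂, WeierstrassCurve.b₄,
    WeierstrassCurve.b₆, WeierstrassCurve.b₈, hn]

lemma j_zero (n : ℤ) [(MordellCurve n).IsElliptic] : (MordellCurve n).j = 0 := by
  rw [WeierstrassCurve.j_eq_zero_iff]
  simp [MordellCurve, WeierstrassCurve.c₄, WeierstrassCurve.b₂, WeierstrassCurve.b₄]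

lemma nbox_ge (R : ℕ) : 4 ≤ Nbox (R + 1) := by
  unfold Nbox
  have : (8 * (R + 1 + 1) + 1) ^ 1 ≤ (8 * (R + 1 + 1) + 1) ^ (R + 1) :=
    Nat.pow_le_pow_right (by omega) (by omega)
  rw [pow_one] at this
  omega

lemma bounded_ht' {n : ℤ} (hn : n ≠ 0) (R : ℕ) [FiniteDimensional ℚ (ℚ ⊗[ℤ] (Pt n))]
    (hr : Module.finrank ℚ (ℚ ⊗[ℤ] (Pt n)) ≤ R) (N1 : ℕ) (hN1 : N1 = Nbox R) (P : Fin N1 → Pt n)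
    (inj : Function.Injective P)
    (hrel : ∀ i j k, i ≠ j → i ≠ k → j ≠ k → Rel (P i) (P j) (P k) N1) (l : Fin N1) :
    ht (P l) ≤ 16 * Ch + 4 * Cg N1 := by
  subst hN1
  exact bounded_ht hn R hr P inj hrel l

theorem main_of_fg (fg : ∀ n : ℤ, n ≠ 0 → AddGroup.FG (Pt n)) (R : ℕ)
    (hR : ∀ (W : WeierstrassCurve ℚ) [W.IsElliptic], W.j = 0 → grpRank W.toAffine.Point ≤ R) :
    ∃ N₀ : ℕ, ∀ n : ℤ, SixthPowerFree n → ∀ (N : ℕ) (x y : Fin N → ℚ),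
      (∀ i, (MordellCurve n).toAffine.Nonsingular (x i) (y i)) →
      (IsNontrivAP x ∨ IsNontrivAP y) → N ≤ N₀ := by
  obtain ⟨N1, hN1⟩ : ∃ N1, N1 = Nbox (R + 1) := ⟨_, rfl⟩
  have h4 : 4 ≤ N1 := by rw [hN1]; exact nbox_ge R
  obtain ⟨L1, hL1⟩ := len_x (16 * Ch + 4 * Cg N1)
  obtain ⟨L2, hL2⟩ := len_y (16 * Ch + 4 * Cg N1)
  refine ⟨N1 + L1 + L2, fun n hn6 N x y hns hap => ?_⟩
  by_contra! hN
  have hn : n ≠ 0 := hn6.1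
  have hn' : (n : ℚ) ≠ 0 := by exact_mod_cast hn
  have := elliptic hn
  have hr : Module.finrank ℚ (ℚ ⊗[ℤ] (Pt n)) ≤ R + 1 := (hR (MordellCurve n) (j_zero n)).trans (by omega)
  have hfg := fg n hn
  have : Module.Finite ℤ (Pt n) := Module.Finite.iff_addGroup_fg.2 hfg
  have hN1N : N1 ≤ N := by omega
  let ι : Fin N1 → Fin N := Fin.castLE hN1N
  have hι : Function.Injective ι := Fin.castLE_injective hN1N
  let P : Fin N1 → Pt n := fun i => Affine.Point.some (x (ι i)) (y (ι i)) (hns _)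
  have apinj : ∀ u : Fin N → ℚ, IsNontrivAP u → Function.Injective u := by
    rintro u ⟨a, b, hb, hu⟩ i j h
    rw [hu, hu, add_right_inj, mul_left_inj' hb] at h
    apply Fin.ext
    have : (i : ℕ) + 1 = j + 1 := by exact_mod_cast h
    omega
  have inj : Function.Injective P := by
    intro i j h
    simp only [P, Affine.Point.some.injEq] at h
    rcases hap with h' | h'
    · exact hι (apinj x h' h.1)
    · exact hι (apinj y h' h.2)
  have aprel : ∀ u : Fin N → ℚ, IsNontrivAP u → ∀ i j k : Fin N1,
      (((j : ℤ) - k : ℤ) : ℚ) * u (ι i) = (((i : ℤ) - k : ℤ) : ℚ) * u (ι j) + (((j : ℤ) - i : ℤ) : ℚ) * u (ι k) := by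
    rintro u ⟨a, b, hb, hu⟩ i j k
    rw [hu, hu, hu]
    simp only [ι, Fin.val_castLE]
    push_cast
    ring
  have hrel : ∀ i j k, i ≠ j → i ≠ k → j ≠ k → Rel (P i) (P j) (P k) N1 := by
    intro i j k hij hik hjk
    refine ⟨_, _, _, _, _, _, _, _, _, rfl, rfl, rfl, (j : ℤ) - k, (i : ℤ) - k, (j : ℤ) - i, ?_, ?_, ?_, ?_, ?_⟩
    · intro h; exact hjk (Fin.ext (by omega))
    · omega
    · omega
    · omega
    · exact hap.imp (fun h => aprel x h i j k) (fun h => aprel y h i j k)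
  have bd := bounded_ht' hn (R + 1) hr N1 hN1 P inj hrel
  have bd' : ∀ i : Fin N, (i : ℕ) < N1 → hh n (x i) ≤ 16 * Ch + 4 * Cg N1 := fun i hi => bd ⟨i, hi⟩
  have heq : ∀ i, y i ^ 2 = x i ^ 3 + n := fun i => (nons hn).1 (hns i)
  rcases hap with ⟨a, b, hb, hu⟩ | ⟨a, b, hb, hu⟩
  · have := hL1 n hn' a b hb (fun k h1 h2 => by
      have := bd' ⟨k - 1, by omega⟩ (by simp only; omega)
      rw [hu] at this
      simpa only [Nat.sub_add_cancel h1] using this) N (fun k h1 h2 => by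
      have := heq ⟨k - 1, by omega⟩
      rw [hu] at this
      simp only [Nat.sub_add_cancel h1] at this
      rw [← this]
      exact IsSquare.sq _)
    omega
  · have := hL2 n hn' a b hb N (by omega) (fun k h1 h2 => by
      have hk : k - 1 < N := by omega
      have h6 : k ≤ 3 → hh n (x ⟨k - 1, hk⟩) ≤ 16 * Ch + 4 * Cg N1 := fun h3 => by
        have h5 : k - 1 < N1 := by omega
        exact bd' ⟨k - 1, hk⟩ h5
      have := heq ⟨k - 1, by omega⟩
      rw [hu] at this
      simp only [Nat.sub_add_cancel h1] at this
      exact ⟨x ⟨k - 1, hk⟩, h6, this⟩)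
    omega
end Moh

namespace Moh
open WeierstrassCurve Polynomial
variable {n : ℤ}

lemma two_nsmul_mem (Q : Pt n) : Q + Q ∈ (nsmulAddMonoidHom (α := Pt n) 2).range :=
  ⟨Q, by simp [two_nsmul]⟩

/-- explicit halving -/
lemma halving (hn : n ≠ 0) {x y : ℚ} (h : (MordellCurve n).toAffine.Nonsingular x y) (a b c : ℚ)
    (h1 : b ^ 2 + 2 * a * c = 0) (h2 : 2 * a * b - c ^ 2 * n = -1) (h3 : a ^ 2 - 2 * b * c * n = x) :
    Affine.Point.some x y h ∈ (nsmulAddMonoidHom (α := Pt n) 2).range := by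
  have hc : c ≠ 0 := by
    rintro rfl
    have : b = 0 := by simpa using h1
    rw [this] at h2
    norm_num at h2
  have ha : a = - b ^ 2 / (2 * c) := by field_simp; linear_combination h1
  have hn' : (n : ℚ) = (1 + 2 * a * b) / c ^ 2 := by field_simp; linear_combination -h2
  have hQ : (MordellCurve n).toAffine.Nonsingular (b / c) (1 / c) := by
    rw [nons hn, hn', ha]; field_simp; ring
  obtain ⟨x₃, y₃, h₃, e, ex, -⟩ := add_dbl hQ (by positivity)
  have exx : x₃ = x := by
    rw [ex, ← h3, hn', ha]; field_simp; ring
  subst exx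
  have q1 := eqn x₃ y h
  have q2 := eqn x₃ y₃ h₃
  rcases sq_eq_sq_iff_eq_or_eq_neg.1 (q1.trans q2.symm) with r | r
  · subst r
    rw [← e]; exact two_nsmul_mem _
  · obtain ⟨h', e'⟩ := neg_pt h₃
    subst r
    have : Affine.Point.some x₃ (-y₃) h = -(Affine.Point.some (b / c) (1 / c) hQ + Affine.Point.some (b / c) (1 / c) hQ) := by
      rw [e, e']
    rw [this]
    exact neg_mem (two_nsmul_mem _)

/-- line through two points -/
lemma line_sq {K : Type*} [Field K] [CharZero K] {x y x' y' x₃ e N : K} (he : e ^ 3 = -N)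
    (h : y ^ 2 = x ^ 3 + N) (h' : y' ^ 2 = x' ^ 3 + N) (hx : x ≠ x')
    (h3 : x₃ = ((y - y') / (x - x')) ^ 2 - x - x') (hne : (x - e) * (x' - e) ≠ 0)
    (hs : IsSquare ((x - e) * (x' - e))) : IsSquare (x₃ - e) := by
  obtain ⟨r, hr⟩ := hs
  have hr0 : r ≠ 0 := by rintro rfl; simp at hr; rcases hr with hr | hr <;> simp [hr] at hne
  refine ⟨((y - y') / (x - x') * (e - x) + y) / r, ?_⟩
  have hd : x - x' ≠ 0 := sub_ne_zero.2 hx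
  obtain ⟨l, hl⟩ : ∃ l, l = (y - y') / (x - x') := ⟨_, rfl⟩
  rw [← hl] at h3 ⊢
  have hy : y' = y - l * (x - x') := by rw [hl]; field_simp; ring
  have k : 2 * l * y - l ^ 2 * (x - x') = x ^ 2 + x * x' + x' ^ 2 := by
    apply mul_left_cancel₀ hd
    rw [hy] at h'
    linear_combination h - h'
  have key : (x₃ - e) * ((x - e) * (x' - e)) = (l * (e - x) + y) ^ 2 := by
    rw [h3]
    linear_combination (-(e - x)) * k - h - he
  rw [hr] at key
  rw [← mul_div_mul_comm, eq_div_iff (mul_ne_zero hr0 hr0)]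
  linear_combination key

lemma quad_zero (p q r : ℚ) (h : C p + C q * X + C r * X ^ 2 = 0) : p = 0 ∧ q = 0 ∧ r = 0 := by
  have c0 := congrArg (fun p => coeff p 0) h
  have c1 := congrArg (fun p => coeff p 1) h
  have c2 := congrArg (fun p => coeff p 2) h
  simp only [coeff_add, coeff_C_mul, coeff_X, coeff_C, coeff_X_pow, coeff_zero] at c0 c1 c2
  norm_num at c0 c1 c2
  exact ⟨c0, c1, c2⟩

/-- the irreducible case -/
lemma coeff_irr (hn : n ≠ 0) {K : Type*} [Field K] [Algebra ℚ K] (f : ℚ[X] →ₐ[ℚ] K)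
    (hs : Function.Surjective f) (hk : ∀ p, f p = 0 ↔ (X ^ 3 + C (n : ℚ)) ∣ p) (x : ℚ)
    (h : IsSquare (f (C x - X))) :
    ∃ a b c : ℚ, b ^ 2 + 2 * a * c = 0 ∧ 2 * a * b - c ^ 2 * n = -1 ∧ a ^ 2 - 2 * b * c * n = x := by
  obtain ⟨M, hM⟩ : ∃ M : ℚ[X], M = X ^ 3 + C (n : ℚ) := ⟨_, rfl⟩
  have hm : M.Monic := by rw [hM]; monicity!
  have hdeg : M.natDegree = 3 := by rw [hM]; compute_degree!
  rw [← hM] at hk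
  have red : ∀ r : K, ∃ a b c : ℚ, r = f (C a + C b * X + C c * X ^ 2) := by
    intro r
    obtain ⟨p, rfl⟩ := hs r
    have hd : (p %ₘ M).natDegree < 3 := by
      rw [← hdeg]; exact natDegree_modByMonic_lt _ hm (by intro h; rw [h] at hdeg; simp at hdeg)
    refine ⟨(p %ₘ M).coeff 0, (p %ₘ M).coeff 1, (p %ₘ M).coeff 2, ?_⟩
    · have e1 := modByMonic_add_div p M
      have e2 := (p %ₘ M).as_sum_range_C_mul_X_pow' hd
      have : f p = f (p %ₘ M) := by
        rw [← sub_eq_zero, ← map_sub, hk]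
        exact ⟨_, by nth_rw 1 [← e1]; rw [add_sub_cancel_left]⟩
      rw [this]
      nth_rw 1 [e2]
      simp only [Finset.sum_range_succ, Finset.sum_range_zero, zero_add, pow_zero, mul_one, pow_one]
  obtain ⟨r, hr⟩ := h
  obtain ⟨a, b, c, rfl⟩ := red r
  refine ⟨a, b, c, ?_⟩
  set g : ℚ[X] := C (a ^ 2 - 2 * b * c * n - x) + C (2 * a * b - c ^ 2 * n + 1) * X + C (b ^ 2 + 2 * a * c) * X ^ 2 with hg
  have hdiv : M ∣ g := by
    have : M ∣ (C a + C b * X + C c * X ^ 2) * (C a + C b * X + C c * X ^ 2) - (C x - X) := by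
      rw [← hk, map_sub, hr, map_mul, sub_self]
    have e : g = ((C a + C b * X + C c * X ^ 2) * (C a + C b * X + C c * X ^ 2) - (C x - X)) -
        M * (C (2 * b * c) + C (c ^ 2) * X) := by
      rw [hg, hM]; simp only [C_add, C_sub, C_mul, C_pow, C_ofNat, C_1]; ring
    rw [e]
    exact dvd_sub this (dvd_mul_right _ _)
  have g0 : g = 0 := by
    refine eq_zero_of_dvd_of_natDegree_lt hdiv ?_
    rw [hdeg]
    have : g.natDegree ≤ 2 := by rw [hg]; compute_degree
    omega
  obtain ⟨c0, c1, c2⟩ := quad_zero _ _ _ g0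
  refine ⟨?_, ?_, ?_⟩ <;> linarith

/-- the split case -/
lemma coeff_split {m x r s t : ℚ} (hm : m ≠ 0) (h1 : x + m = r ^ 2) (h2 : x = s ^ 2 - t ^ 2)
    (h3 : m = 2 * s * t - t ^ 2) : ∃ a b c : ℚ, b ^ 2 + 2 * a * c = 0 ∧
      2 * a * b - c ^ 2 * m ^ 3 = -1 ∧ a ^ 2 - 2 * b * c * m ^ 3 = x := by
  obtain ⟨c, hc⟩ : ∃ c, c = (r - s - t) / (3 * m ^ 2) := ⟨_, rfl⟩
  obtain ⟨a, ha⟩ : ∃ a, a = s + c * m ^ 2 := ⟨_, rfl⟩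
  obtain ⟨b, hb⟩ : ∃ b, b = -(t + c * m ^ 2) / m := ⟨_, rfl⟩
  have es : s = a - c * m ^ 2 := by rw [ha]; ring
  have et : t = -(b * m) - c * m ^ 2 := by rw [hb]; field_simp; ring
  have er : r = a - b * m + c * m ^ 2 := by
    have : r - s - t = c * (3 * m ^ 2) := by rw [hc]; field_simp
    linear_combination this + es + et
  clear hc ha hb
  subst er et es
  have A2 : b ^ 2 + 2 * a * c = 0 := by
    have : 3 * m ^ 2 ≠ 0 := by positivity
    apply mul_left_cancel₀ this
    linear_combination -h1 + h2 + h3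
  have A1 : 2 * a * b - c ^ 2 * m ^ 3 + 1 = 0 := by
    apply mul_left_cancel₀ hm
    linear_combination h3 - m ^ 2 * A2
  refine ⟨a, b, c, A2, by linarith, ?_⟩
  linear_combination -h2 + m ^ 2 * A2

/-- coefficients in the field of third roots of unity -/
lemma coeff_omega {K : Type*} [Field K] [Algebra ℚ K] (f : ℚ[X] →ₐ[ℚ] K)
    (hs : Function.Surjective f) (hk : ∀ p, f p = 0 ↔ (X ^ 2 + X + 1) ∣ p) (x m : ℚ)
    (h : IsSquare (f (C x + C m * X))) : ∃ s t : ℚ, x = s ^ 2 - t ^ 2 ∧ m = 2 * s * t - t ^ 2 := by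
  obtain ⟨M, hM⟩ : ∃ M : ℚ[X], M = X ^ 2 + X + 1 := ⟨_, rfl⟩
  have hm : M.Monic := by rw [hM]; monicity!
  have hdeg : M.natDegree = 2 := by rw [hM]; compute_degree!
  rw [← hM] at hk
  have red : ∀ r : K, ∃ a b : ℚ, r = f (C a + C b * X) := by
    intro r
    obtain ⟨p, rfl⟩ := hs r
    have hd : (p %ₘ M).natDegree < 2 := by
      rw [← hdeg]; exact natDegree_modByMonic_lt _ hm (by intro h; rw [h] at hdeg; simp at hdeg)
    refine ⟨(p %ₘ M).coeff 0, (p %ₘ M).coeff 1, ?_⟩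
    have e1 := modByMonic_add_div p M
    have e2 := (p %ₘ M).as_sum_range_C_mul_X_pow' hd
    have : f p = f (p %ₘ M) := by
      rw [← sub_eq_zero, ← map_sub, hk]
      exact ⟨_, by nth_rw 1 [← e1]; rw [add_sub_cancel_left]⟩
    rw [this]
    nth_rw 1 [e2]
    simp only [Finset.sum_range_succ, Finset.sum_range_zero, zero_add, pow_zero, mul_one, pow_one]
  obtain ⟨r, hr⟩ := h
  obtain ⟨s, t, rfl⟩ := red r
  refine ⟨s, t, ?_⟩
  set g : ℚ[X] := C (s ^ 2 - t ^ 2 - x) + C (2 * s * t - t ^ 2 - m) * X + C 0 * X ^ 2 with hg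
  have hdiv : M ∣ g := by
    have : M ∣ (C s + C t * X) * (C s + C t * X) - (C x + C m * X) := by
      rw [← hk, map_sub, hr, map_mul, sub_self]
    have e : g = ((C s + C t * X) * (C s + C t * X) - (C x + C m * X)) - M * C (t ^ 2) := by
      rw [hg, hM]; simp only [C_add, C_sub, C_mul, C_pow, C_ofNat, C_1, C_0]; ring
    rw [e]
    exact dvd_sub this (dvd_mul_right _ _)
  have g0 : g = 0 := by
    refine eq_zero_of_dvd_of_natDegree_lt hdiv ?_
    rw [hdeg]
    have : g.natDegree ≤ 1 := by rw [hg, C_0, zero_mul, add_zero]; compute_degree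
    omega
  obtain ⟨c0, c1, -⟩ := quad_zero _ _ _ g0
  constructor <;> linarith

end Moh

namespace Moh
open NumberField nonZeroDivisors

lemma ideal_sq {O : Type*} [CommRing O] [IsDedekindDomain O] {α α' w : O} (hw : w ≠ 0)
    (h : α * α' = w ^ 2) : ∃ b : Ideal O, b ≠ 0 ∧
      Ideal.span {α} = (Ideal.span {α} ⊔ Ideal.span {α'}) * b ^ 2 := by
  have h' : Ideal.span {α} * Ideal.span {α'} = Ideal.span {w} ^ 2 := by
    rw [Ideal.span_singleton_mul_span_singleton, h, Ideal.span_singleton_pow]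
  have hα : Ideal.span {α} ≠ 0 := by
    rw [Ne, Ideal.zero_eq_bot, Ideal.span_singleton_eq_bot]
    rintro rfl
    rw [zero_mul] at h
    exact hw (pow_eq_zero_iff (two_ne_zero)|>.1 h.symm)
  generalize Ideal.span {α} = A at *
  generalize Ideal.span {α'} = A' at *
  generalize Ideal.span {w} = W at *
  rw [← Ideal.gcd_eq_sup]
  obtain ⟨B, B', e, e', hu⟩ := extract_gcd A A'
  generalize gcd A A' = J at *
  have hJ : J ≠ 0 := by rintro rfl; rw [zero_mul] at e; exact hα e
  have hdv : J ∣ W := by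
    rw [← UniqueFactorizationMonoid.pow_dvd_pow_iff_dvd two_ne_zero, ← h', e, e']
    exact ⟨B * B', by ring⟩
  obtain ⟨V, rfl⟩ := hdv
  have e2 : B * B' = V ^ 2 := by
    apply mul_left_cancel₀ (pow_ne_zero 2 hJ)
    rw [← mul_pow, ← h', e, e']; ring
  obtain ⟨b, hb⟩ := exists_eq_pow_of_mul_eq_pow hu e2
  refine ⟨b, ?_, by rw [← hb]; exact e⟩
  rintro rfl
  rw [zero_pow two_ne_zero] at hb
  rw [hb, mul_zero] at e
  exact hα e

/-- finitely many square classes of elements whose ideal is a square up to a fixed divisor -/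
lemma fin_classes (K : Type*) [Field K] [NumberField K] (D : 𝓞 K) (hD : D ≠ 0) :
    ∃ S : Set (𝓞 K), S.Finite ∧ ∀ α : 𝓞 K, α ≠ 0 → ∀ J b : Ideal (𝓞 K), b ≠ 0 → D ∈ J →
      Ideal.span {α} = J * b ^ 2 → ∃ s ∈ S, s ≠ 0 ∧ IsSquare ((s : K) * (α : K)) := by
  classical
  -- units
  have hidx : (powMonoidHom (α := (𝓞 K)ˣ) 2).range.FiniteIndex := by
    have : Group.FG (𝓞 K)ˣ := Group.fg_iff_monoid_fg.2 inferInstance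
    exact Subgroup.finiteIndex_range_powMonoidHom_of_fg _ two_ne_zero
  have hfq : Finite ((𝓞 K)ˣ ⧸ (powMonoidHom (α := (𝓞 K)ˣ) 2).range) := inferInstance
  -- ideals
  have hJfin : Finite {J : Ideal (𝓞 K) // D ∈ J} := by
    have h0 : Ideal.span {D} ≠ 0 := by simpa using hD
    have := (UniqueFactorizationMonoid.fintypeSubtypeDvd (Ideal.span {D}) h0)
    refine Finite.of_injective (β := {J : Ideal (𝓞 K) // J ∣ Ideal.span {D}})
      (fun J => ⟨J.1, Ideal.dvd_iff_le.2 ((Ideal.span_singleton_le_iff_mem _).2 J.2)⟩) ?_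
    intro J J' h
    exact Subtype.ext (congrArg (fun z => z.1) h)
  -- representatives
  let T := {J : Ideal (𝓞 K) // D ∈ J} × ClassGroup (𝓞 K)
  let good : T → 𝓞 K → Prop := fun t α => α ≠ 0 ∧ ∃ b : (Ideal (𝓞 K))⁰,
    Ideal.span {α} = t.1.1 * (b : Ideal (𝓞 K)) ^ 2 ∧ ClassGroup.mk0 b = t.2
  let rep : T → 𝓞 K := fun t => if h : ∃ α, good t α then h.choose else 1
  let S : Set (𝓞 K) := Set.range fun p : T × ((𝓞 K)ˣ ⧸ (powMonoidHom (α := (𝓞 K)ˣ) 2).range) =>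
    rep p.1 * (p.2.out : (𝓞 K)ˣ)
  refine ⟨S, Set.finite_range _, ?_⟩
  intro α hα J b hb hDJ e
  let b' : (Ideal (𝓞 K))⁰ := ⟨b, mem_nonZeroDivisors_of_ne_zero hb⟩
  let t : T := (⟨J, hDJ⟩, ClassGroup.mk0 b')
  have hgt : good t α := ⟨hα, b', e, rfl⟩
  have hex : ∃ α, good t α := ⟨α, hgt⟩
  have hrep : good t (rep t) := by
    simp only [rep, dif_pos hex]
    exact hex.choose_spec
  obtain ⟨hα₀, b₀, e₀, c₀⟩ := hrep
  obtain ⟨x, y, hx, hy, hxy⟩ := ClassGroup.mk0_eq_mk0_iff.1 c₀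
  have hspan : Ideal.span {rep t * x ^ 2} = Ideal.span {α * y ^ 2} := by
    rw [← Ideal.span_singleton_mul_span_singleton, ← Ideal.span_singleton_mul_span_singleton,
      ← Ideal.span_singleton_pow, ← Ideal.span_singleton_pow, e, e₀]
    have : (b' : Ideal (𝓞 K)) = b := rfl
    calc J * (b₀ : Ideal (𝓞 K)) ^ 2 * Ideal.span {x} ^ 2 = J * (Ideal.span {x} * b₀) ^ 2 := by ring
      _ = J * (Ideal.span {y} * b) ^ 2 := by rw [hxy]
      _ = _ := by ring
  obtain ⟨u, hu⟩ := Ideal.span_singleton_eq_span_singleton.1 hspan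
  let U := (powMonoidHom (α := (𝓞 K)ˣ) 2).range
  have hm : (Quotient.out (u : (𝓞 K)ˣ ⧸ U))⁻¹ * u ∈ U := by
    rw [← QuotientGroup.eq]; exact QuotientGroup.out_eq' _
  obtain ⟨v, hv⟩ := hm
  have hv' : (u : 𝓞 K) = ((Quotient.out (u : (𝓞 K)ˣ ⧸ U) : (𝓞 K)ˣ) : 𝓞 K) * (v : 𝓞 K) ^ 2 := by
    have : u = Quotient.out (u : (𝓞 K)ˣ ⧸ U) * v ^ 2 := by
      rw [eq_comm, ← eq_inv_mul_iff_mul_eq]; exact hv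
    have := congrArg (Units.val) this
    simpa using this
  refine ⟨rep t * (Quotient.out (u : (𝓞 K)ˣ ⧸ U) : (𝓞 K)ˣ), ⟨(t, u), rfl⟩, ?_, ?_⟩
  · exact mul_ne_zero hα₀ (Units.ne_zero _)
  · have hx' : (x : K) ≠ 0 := by exact_mod_cast hx
    have hv0 : ((v : 𝓞 K) : K) ≠ 0 := by exact_mod_cast v.ne_zero
    refine ⟨α * y / (x * v), ?_⟩
    rw [hv'] at hu
    have hu' := congrArg (algebraMap (𝓞 K) K) hu
    simp only [map_mul, map_pow] at hu' ⊢
    field_simp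
    linear_combination (algebraMap (𝓞 K) K α) * hu'

lemma lowest (x y : ℚ) (n : ℤ) (hy : y ≠ 0) (hxy : y ^ 2 = x ^ 3 + n) :
    ∃ p d w : ℤ, d ≠ 0 ∧ IsCoprime p d ∧ x = p / d ^ 2 ∧ w ≠ 0 ∧ p ^ 3 + n * d ^ 6 = w ^ 2 := by
  obtain ⟨p, q, hq, hc, hx⟩ : ∃ p q : ℤ, 0 < q ∧ IsCoprime p q ∧ x = p / q := by
    refine ⟨x.num, x.den, by exact_mod_cast x.den_pos, ?_, (Rat.num_div_den x).symm⟩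
    rw [Int.isCoprime_iff_gcd_eq_one]
    exact x.reduced
  have hq0 : (q : ℚ) ≠ 0 := by exact_mod_cast hq.ne'
  obtain ⟨z, hz⟩ := rat_pow_int (r := q ^ 2 * y) (m := 2) (by norm_num)
    (z := q * (p ^ 3 + n * q ^ 3)) (by
      rw [mul_pow, hxy, hx]; push_cast; field_simp)
  have hc2 : IsCoprime q (p ^ 3 + n * q ^ 3) := by
    have h1 : IsCoprime q (p ^ 3) := (hc.pow_left).symm
    have := h1.add_mul_left_right (n * q ^ 2)
    have e : p ^ 3 + n * q ^ 3 = p ^ 3 + q * (n * q ^ 2) := by ring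
    rw [e]; exact this
  obtain ⟨d, hd⟩ := Int.sq_of_isCoprime hc2 hz
  have hd' : q = d ^ 2 := by
    rcases hd with h | h
    · exact h
    · nlinarith [sq_nonneg d]
  have hd0 : d ≠ 0 := by rintro rfl; simp at hd'; omega
  have hdq : (d : ℚ) ≠ 0 := by exact_mod_cast hd0
  have hqd : (q : ℚ) = (d : ℚ) ^ 2 := by exact_mod_cast hd'
  have hw1 : ((p ^ 3 + n * d ^ 6 : ℤ) : ℚ) = (y * d ^ 3) ^ 2 := by
    rw [mul_pow, hxy, hx, hqd]; push_cast; field_simp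
  obtain ⟨w, hw⟩ := rat_pow_int (m := 2) (by norm_num) hw1
  refine ⟨p, d, w, hd0, ?_, by rw [hx, hqd], ?_, hw⟩
  · rw [hd'] at hc
    exact (IsCoprime.pow_right_iff (by norm_num)).1 hc
  · rintro rfl
    rw [hw] at hw1
    have : y * d ^ 3 ≠ 0 := mul_ne_zero hy (pow_ne_zero 3 hdq)
    apply pow_ne_zero 2 this
    rw [← hw1]; simp

/-- the key finiteness statement of the 2-descent -/
theorem fin_descent (K : Type*) [Field K] [NumberField K] (n : ℤ) (hn : n ≠ 0) (e : K)
    (he : e ^ 3 = -(n : K)) : ∃ S : Set K, S.Finite ∧ ∀ x y : ℚ, y ≠ 0 → y ^ 2 = x ^ 3 + n →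
      ∃ s ∈ S, s ≠ 0 ∧ IsSquare (s * ((x : K) - e)) := by
  have heint : IsIntegral ℤ e := by
    refine IsIntegral.of_pow (n := 3) (by norm_num) ?_
    rw [he, ← Int.cast_neg]
    exact isIntegral_algebraMap
  obtain ⟨ε, hε⟩ : ∃ ε : 𝓞 K, algebraMap (𝓞 K) K ε = e := ⟨⟨e, heint⟩, rfl⟩
  have hε3 : ε ^ 3 = -(n : 𝓞 K) := by
    apply FaithfulSMul.algebraMap_injective (𝓞 K) K
    simp only [map_pow, map_neg, map_intCast]
    rw [hε, he]
  have hε0 : ε ≠ 0 := by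
    rintro rfl
    rw [zero_pow three_ne_zero, eq_comm, neg_eq_zero] at hε3
    exact hn (by exact_mod_cast hε3)
  obtain ⟨S, hS, H⟩ := fin_classes K (3 * ε ^ 2) (mul_ne_zero (by norm_num) (pow_ne_zero 2 hε0))
  refine ⟨(fun s : 𝓞 K => (s : K)) '' S, hS.image _, fun x y hy hxy => ?_⟩
  obtain ⟨p, d, w, hd, hcop, hx, hw, hpw⟩ : ∃ p d w : ℤ, d ≠ 0 ∧ IsCoprime p d ∧ x = p / d ^ 2 ∧ w ≠ 0 ∧
      p ^ 3 + n * d ^ 6 = w ^ 2 := lowest x y n hy hxy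
  let α : 𝓞 K := p - d ^ 2 * ε
  let α' : 𝓞 K := p ^ 2 + p * d ^ 2 * ε + d ^ 4 * ε ^ 2
  have hαα : α * α' = (w : 𝓞 K) ^ 2 := by
    have : (p : 𝓞 K) ^ 3 + n * d ^ 6 = (w : 𝓞 K) ^ 2 := by exact_mod_cast hpw
    rw [← this]
    simp only [α, α']
    linear_combination (-(d : 𝓞 K) ^ 6) * hε3
  have hw' : (w : 𝓞 K) ≠ 0 := by exact_mod_cast hw
  obtain ⟨b, hb, hJ⟩ := ideal_sq hw' hαα
  have hα : α ≠ 0 := by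
    intro h
    rw [h, zero_mul] at hαα
    exact hw' (pow_eq_zero_iff two_ne_zero |>.1 hαα.symm)
  have hmem : 3 * ε ^ 2 ∈ Ideal.span {α} ⊔ Ideal.span {α'} := by
    have hc : IsCoprime (p ^ 2) (d ^ 4) := hcop.pow
    obtain ⟨s, t, hst⟩ := hc
    have hst' : (s : 𝓞 K) * p ^ 2 + t * d ^ 4 = 1 := by exact_mod_cast hst
    rw [← Ideal.span_insert, Ideal.mem_span_pair]
    refine ⟨s * (3 * ε ^ 2 * (p + d ^ 2 * ε)) - (t + s * ε ^ 2) * (p + 2 * d ^ 2 * ε), t + s * ε ^ 2, ?_⟩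
    simp only [α, α']
    linear_combination (3 * ε ^ 2) * hst'
  obtain ⟨s, hs, hs0, r, hr⟩ := H α hα _ b hb hmem hJ
  refine ⟨s, ⟨s, hs, rfl⟩, by exact_mod_cast hs0, r / d, ?_⟩
  have hd' : (d : K) ≠ 0 := by exact_mod_cast hd
  have e1 : (x : K) = p / d ^ 2 := by rw [hx]; push_cast; rfl
  have e2 : algebraMap (𝓞 K) K α = p - d ^ 2 * e := by
    simp only [α, map_sub, map_mul, map_pow, map_intCast, hε]
  change algebraMap (𝓞 K) K s * algebraMap (𝓞 K) K α = r * r at hr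
  rw [e2] at hr
  rw [e1]
  field_simp
  linear_combination hr
end Moh

namespace Moh
open WeierstrassCurve Polynomial

lemma findex {n : ℤ} (hn : n ≠ 0) {F : Type} [Finite F] (φ : ℚ → F)
    (H : ∀ x y x' y' x₃ : ℚ, y ≠ 0 → y' ≠ 0 → y ^ 2 = x ^ 3 + n → y' ^ 2 = x' ^ 3 + n → x ≠ x' →
      φ x = φ x' → x₃ = ((y - y') / (x - x')) ^ 2 - x - x' →
      ∃ a b c : ℚ, b ^ 2 + 2 * a * c = 0 ∧ 2 * a * b - c ^ 2 * n = -1 ∧ a ^ 2 - 2 * b * c * n = x₃) :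
    (nsmulAddMonoidHom (α := Pt n) 2).range.FiniteIndex := by
  classical
  let Φ : Pt n → Option (Option F) := fun P => match P with
    | Affine.Point.zero => none
    | Affine.Point.some x y _ => if y = 0 then some none else some (some (φ x))
  have key : ∀ P Q : Pt n, Φ P = Φ Q → P - Q ∈ (nsmulAddMonoidHom (α := Pt n) 2).range := by
    intro P Q h
    rcases P with _ | ⟨x, y, hP⟩ <;> rcases Q with _ | ⟨x', y', hQ⟩
    · rw [sub_self]; exact zero_mem _
    · simp only [Φ] at h; split_ifs at h
    · simp only [Φ] at h; split_ifs at h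
    · have e1 := eqn _ _ hP
      have e2 := eqn _ _ hQ
      have hx0 : x = x' → Affine.Point.some x y hP - Affine.Point.some x' y' hQ ∈
          (nsmulAddMonoidHom (α := Pt n) 2).range := by
        rintro rfl
        rcases y_or hP hQ with rfl | h2
        · rw [sub_self]; exact zero_mem _
        · have : -(Affine.Point.some x y' hQ : Pt n) = Affine.Point.some x y hP := by
            obtain ⟨h', e⟩ := neg_pt hQ
            rw [e]; subst h2; rfl
          rw [sub_eq_add_neg, this]
          exact two_nsmul_mem _
      by_cases hxx : x = x'
      · exact hx0 hxx
      · simp only [Φ] at h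
        split_ifs at h with hy hy' hy'
        · exfalso
          apply hxx
          rw [hy] at e1; rw [hy'] at e2
          have : x ^ 3 = x' ^ 3 := by linarith
          exact (Odd.strictMono_pow (by decide : Odd 3)).injective this
        · simp at h
        · simp at h
        · obtain ⟨h', e⟩ := neg_pt hQ
          obtain ⟨x₃, y₃, h₃, es, ex, -⟩ := add_ne hP h' hxx
          rw [sub_eq_add_neg, e, es]
          obtain ⟨a, b, c, i1, i2, i3⟩ := H x y x' (-y') x₃ hy (neg_ne_zero.2 hy') e1
            (by rw [neg_sq]; exact e2) hxx (by simpa using h) ex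
          exact halving hn h₃ a b c i1 i2 i3
  rw [AddSubgroup.finiteIndex_iff_finite_quotient]
  refine Finite.of_injective (fun q : Pt n ⧸ (nsmulAddMonoidHom (α := Pt n) 2).range => Φ q.out) ?_
  intro q q' h
  rw [← QuotientAddGroup.out_eq' q, ← QuotientAddGroup.out_eq' q', QuotientAddGroup.eq]
  have := key _ _ h.symm
  rwa [sub_eq_add_neg, add_comm] at this

lemma class_map (K : Type) [Field K] [NumberField K] (n : ℤ) (hn : n ≠ 0) (e : K)
    (he : e ^ 3 = -(n : K)) : ∃ (F : Type) (_ : Finite F) (φ : ℚ → F),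
    ∀ x y x' y' x₃ : ℚ, y ≠ 0 → y' ≠ 0 → y ^ 2 = x ^ 3 + n → y' ^ 2 = x' ^ 3 + n → x ≠ x' →
      φ x = φ x' → x₃ = ((y - y') / (x - x')) ^ 2 - x - x' → IsSquare ((x₃ : K) - e) := by
  classical
  obtain ⟨S, hS, H⟩ := fin_descent K n hn e he
  have : Finite S := hS
  let good : ℚ → S → Prop := fun x s => (s : K) ≠ 0 ∧ IsSquare ((s : K) * ((x : K) - e))
  refine ⟨Option S, inferInstance, fun x => if h : ∃ s, good x s then some h.choose else none, ?_⟩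
  intro x y x' y' x₃ hy hy' h h' hxx hφ h3
  have g : ∃ s, good x s := by
    obtain ⟨s, hs, h0, h1⟩ := H x y hy h
    exact ⟨⟨s, hs⟩, h0, h1⟩
  have g' : ∃ s, good x' s := by
    obtain ⟨s, hs, h0, h1⟩ := H x' y' hy' h'
    exact ⟨⟨s, hs⟩, h0, h1⟩
  simp only [dif_pos g, dif_pos g', Option.some.injEq] at hφ
  obtain ⟨s0, r, hr⟩ := g.choose_spec
  obtain ⟨-, r', hr'⟩ := g'.choose_spec
  rw [← hφ] at hr'
  generalize g.choose = s at *
  have ne : ∀ x y : ℚ, y ≠ 0 → y ^ 2 = x ^ 3 + n → (x : K) - e ≠ 0 := by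
    intro x y hy h hc
    have hc' : (x : K) = e := sub_eq_zero.1 hc
    rw [← hc'] at he
    have : x ^ 3 = -(n : ℚ) := by exact_mod_cast he
    rw [this] at h
    apply hy
    have : y ^ 2 = 0 := by rw [h]; ring
    exact pow_eq_zero_iff two_ne_zero |>.1 this
  refine line_sq (x := (x : K)) (y := y) (x' := x') (y' := y') (N := (n : K)) he (by exact_mod_cast h)
    (by exact_mod_cast h') (by exact_mod_cast hxx) (by rw [h3]; push_cast; rfl)
    (mul_ne_zero (ne x y hy h) (ne x' y' hy' h')) ⟨r * r' / s, ?_⟩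
  field_simp
  linear_combination (s * ((x' : K) - e)) * hr + (r * r) * hr'

lemma mk_facts (M : ℚ[X]) (hm : M.Monic) (hirr : Irreducible M) :
    ∃ (K : Type) (_ : Field K) (_ : NumberField K) (f : ℚ[X] →ₐ[ℚ] K),
      Function.Surjective f ∧ ∀ p, f p = 0 ↔ M ∣ p := by
  have : Fact (Irreducible M) := ⟨hirr⟩
  have : FiniteDimensional ℚ (AdjoinRoot M) := (AdjoinRoot.powerBasis hm.ne_zero).finite
  have : CharZero (AdjoinRoot M) := algebraRat.charZero _
  have hN : NumberField (AdjoinRoot M) := by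
    refine { to_charZero := this, to_finiteDimensional := ?_ }
    convert ‹FiniteDimensional ℚ (AdjoinRoot M)›
  refine ⟨AdjoinRoot M, inferInstance, hN, ?_⟩
  exact ⟨(AdjoinRoot.mk M).toRatAlgHom, AdjoinRoot.mk_surjective, fun p => AdjoinRoot.mk_eq_zero⟩

lemma findex_irr {n : ℤ} (hn : n ≠ 0) (hc : ∀ m : ℚ, m ^ 3 ≠ n) :
    (nsmulAddMonoidHom (α := Pt n) 2).range.FiniteIndex := by
  have hirr : Irreducible (X ^ 3 + C (n : ℚ)) := by
    have := X_pow_sub_C_irreducible_of_prime (K := ℚ) Nat.prime_three (a := -(n : ℚ))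
      (fun b hb => hc (-b) (by rw [Odd.neg_pow (by decide), hb, neg_neg]))
    rwa [C_neg, sub_neg_eq_add] at this
  obtain ⟨K, _, _, f, hs, hk⟩ := mk_facts (X ^ 3 + C (n : ℚ)) (by monicity!) hirr
  have he : f X ^ 3 = -(n : K) := by
    have h0 := (hk (X ^ 3 + C (n : ℚ))).2 dvd_rfl
    have h1 : f (C (n : ℚ)) = (n : K) := by
      rw [← Polynomial.algebraMap_eq, AlgHom.commutes]; simp
    rw [map_add, map_pow, h1] at h0
    exact eq_neg_of_add_eq_zero_left h0
  obtain ⟨F, _, φ, H⟩ := class_map K n hn (f X) he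
  refine findex hn φ ?_
  intro x y x' y' x₃ hy hy' h h' hxx hφ h3
  refine coeff_irr hn f hs hk x₃ ?_
  have h1 : f (C x₃) = (x₃ : K) := by
    rw [← Polynomial.algebraMap_eq, AlgHom.commutes]; simp
  rw [map_sub, h1]
  exact H x y x' y' x₃ hy hy' h h' hxx hφ h3

lemma findex_cube {n : ℤ} (hn : n ≠ 0) (m : ℚ) (hm : m ^ 3 = n) :
    (nsmulAddMonoidHom (α := Pt n) 2).range.FiniteIndex := by
  have hm0 : m ≠ 0 := by
    rintro rfl
    apply hn
    have : (n : ℚ) = 0 := by rw [← hm]; norm_num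
    exact_mod_cast this
  have hirr : Irreducible (X ^ 2 + X + 1 : ℚ[X]) := by
    rw [← cyclotomic_three]
    exact cyclotomic.irreducible_rat (by norm_num)
  obtain ⟨K, _, _, f, hs, hk⟩ := mk_facts (X ^ 2 + X + 1) (by monicity!) hirr
  have h0 : f X ^ 2 + f X + 1 = 0 := by
    have h0 := (hk (X ^ 2 + X + 1)).2 dvd_rfl
    rwa [map_add, map_add, map_pow, map_one] at h0
  have hmK : (m : K) ^ 3 = n := by exact_mod_cast hm
  have he : (-(m : K) * f X) ^ 3 = -(n : K) := by
    rw [← hmK]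
    linear_combination (-(m : K) ^ 3) * (f X - 1) * h0
  obtain ⟨F, _, φ, H⟩ := class_map K n hn (-(m : K) * f X) he
  obtain ⟨F', _, φ', H'⟩ := class_map ℚ n hn (-m) (by rw [Odd.neg_pow (by decide), hm])
  refine findex hn (fun x => (φ x, φ' x)) ?_
  intro x y x' y' x₃ hy hy' h h' hxx hφ h3
  rw [Prod.mk.injEq] at hφ
  have i1 := H x y x' y' x₃ hy hy' h h' hxx hφ.1 h3
  obtain ⟨r, hr⟩ := H' x y x' y' x₃ hy hy' h h' hxx hφ.2 h3
  have hC : ∀ z : ℚ, f (C z) = (z : K) := fun z => by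
    rw [← Polynomial.algebraMap_eq, AlgHom.commutes]; simp
  obtain ⟨s, t, e1, e2⟩ := coeff_omega f hs hk x₃ m (by
    rw [map_add, map_mul, hC, hC]
    rwa [neg_mul, sub_neg_eq_add] at i1)
  rw [← hm]
  exact coeff_split hm0 (r := r) (by rw [sub_neg_eq_add] at hr; rw [pow_two, ← hr]; simp) e1 e2

theorem fg (n : ℤ) (hn : n ≠ 0) : AddGroup.FG (Pt n) := by
  have := northcott_ht hn
  refine AddCommGroup.fg_of_descent' (h := ht) (C := 2 * Ch) ?_ ht_nonneg (ht_par hn)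
  by_cases hc : ∃ m : ℚ, m ^ 3 = n
  · obtain ⟨m, hm⟩ := hc
    exact findex_cube hn m hm
  · push Not at hc
    exact findex_irr hn hc
end Moh

/-- Uniform boundedness of ranks of elliptic curves over `ℚ` with `j`-invariant `0` implies
Mohanty's conjecture: a uniform bound on the length of non-trivial arithmetic progressions in
the `x`- or `y`-coordinates of rational points of Mordell curves `Aₙ : y² = x³ + n`,
`n` sixth-power free. -/
theorem mohanty_of_rank_bounded
    (R : ℕ)
    (hR : ∀ (W : WeierstrassCurve ℚ) [W.IsElliptic], W.j = 0 →
      grpRank W.toAffine.Point ≤ R) :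
    ∃ N₀ : ℕ, ∀ n : ℤ, SixthPowerFree n →
      ∀ (N : ℕ) (x y : Fin N → ℚ),
        (∀ i, (MordellCurve n).toAffine.Nonsingular (x i) (y i)) →
        (IsNontrivAP x ∨ IsNontrivAP y) →
        N ≤ N₀ := by
  exact Moh.main_of_fg Moh.fg R hR
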